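/- Let P be a simple 3-polytope with p_3 = 0. If a 3-loop L_3 = (F_i, F_j, F_k) is not a 3-belt, then F_i ∩ F_j ∩ F_k is a vertex, and L_3 borders a k-loop with k = s_i + s_j + s_k − 9 ≥ 3, where s_i, s_j, s_k are the numbers of edges of F_i, F_j, F_k. -/

import Mathlib

open Set

noncomputable section

/-- The ambient space `ℝ³`. -/
abbrev E3 := EuclideanSpace ℝ (Fin 3)

/-- The cyclic successor in `Fin k`. -/
def nxt {k : ℕ} (i : Fin k) : Fin k := ⟨(i.1 + 1) % k, Nat.mod_lt _ i.pos⟩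

/-- The cyclic predecessor in `Fin k`. -/
def prv {k : ℕ} (i : Fin k) : Fin k := ⟨(i.1 + (k - 1)) % k, Nat.mod_lt _ i.pos⟩

/-- A convex polytope in `ℝ³`: the convex hull of a finite set of points. -/
def IsPolytope (P : Set E3) : Prop := ∃ V : Finset E3, P = convexHull ℝ (V : Set E3)

/-- The dimension of a subset of `ℝ³` (the dimension of its affine hull). -/
def setDim (A : Set E3) : ℕ := Module.finrank ℝ ↥(vectorSpan ℝ A)

/-- A face of a polytope: a nonempty closed convex extreme subset. -/
def IsFaceOf (F P : Set E3) : Prop :=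
  F.Nonempty ∧ IsClosed F ∧ Convex ℝ F ∧ IsExtreme ℝ P F

/-- A facet: a `2`-dimensional face. -/
def IsFacetOf (F P : Set E3) : Prop := IsFaceOf F P ∧ setDim F = 2

/-- An edge: a `1`-dimensional face. -/
def IsEdgeOf (F P : Set E3) : Prop := IsFaceOf F P ∧ setDim F = 1

/-- A vertex: a point whose singleton is a face. -/
def IsVertexOf (v : E3) (P : Set E3) : Prop := IsFaceOf {v} P

/-- The set of facets of `P`. -/
def facets (P : Set E3) : Set (Set E3) := {F | IsFacetOf F P}

/-- A simple 3-polytope: a 3-dimensional convex polytope each of whose vertices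
is contained in exactly 3 facets. -/
def IsSimplePolytope3 (P : Set E3) : Prop :=
  IsPolytope P ∧ setDim P = 3 ∧
    ∀ v : E3, IsVertexOf v P → {F | IsFacetOf F P ∧ v ∈ F}.ncard = 3

/-- The number of edges of a facet `F` of `P`. -/
def facetEdges (P F : Set E3) : ℕ := {e | IsEdgeOf e P ∧ e ⊆ F}.ncard

/-- `pVec P k` is the number of `k`-gonal facets of `P`. -/
def pVec (P : Set E3) (k : ℕ) : ℕ := {F | IsFacetOf F P ∧ facetEdges P F = k}.ncard

/-- A (mathematical) fullerene: a simple 3-polytope with all facets pentagons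
and hexagons. -/
def IsFullerene (P : Set E3) : Prop :=
  IsSimplePolytope3 P ∧ ∀ F, IsFacetOf F P → facetEdges P F = 5 ∨ facetEdges P F = 6

/-- A `k`-loop in `P` (`k ≥ 2`): a cyclic sequence of facets in which
(cyclically) consecutive facets intersect in an edge; a `1`-loop is a single facet. -/
def IsLoop (P : Set E3) {k : ℕ} (L : Fin k → Set E3) : Prop :=
  0 < k ∧ (∀ i, IsFacetOf (L i) P) ∧ (2 ≤ k → ∀ i, IsEdgeOf (L i ∩ L (nxt i)) P)

/-- A simple loop: a loop with pairwise different facets. -/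
def IsSimpleLoop (P : Set E3) {k : ℕ} (L : Fin k → Set E3) : Prop :=
  IsLoop P L ∧ Function.Injective L

/-- A `k`-belt (`k ≥ 3`): a `k`-loop such that for `k = 3` the three facets have empty
total intersection, and for `k ≥ 4` two facets intersect iff they are cyclically successive. -/
def IsBelt (P : Set E3) {k : ℕ} (L : Fin k → Set E3) : Prop :=
  3 ≤ k ∧ IsLoop P L ∧
    (k = 3 → ∀ i, L i ∩ L (nxt i) ∩ L (nxt (nxt i)) = ∅) ∧
    (4 ≤ k → ∀ p q, p ≠ q → ((L p ∩ L q).Nonempty ↔ q = nxt p ∨ p = nxt q))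

/-- A flag 3-polytope: a simple 3-polytope different from the tetrahedron
(i.e. not having exactly 4 facets) without 3-belts. -/
def IsFlag3Polytope (P : Set E3) : Prop :=
  IsSimplePolytope3 P ∧ (facets P).ncard ≠ 4 ∧ ∀ B : Fin 3 → Set E3, ¬ IsBelt P B

/-- `γ` is the simple edge-cycle of `P` traced by the cyclically ordered distinct
vertices `v 0, …, v (n-1)` (`n ≥ 3`), consecutive ones joined by edges of `P`. -/
def IsSimpleEdgeCycleVia (P γ : Set E3) {n : ℕ} (v : Fin n → E3) : Prop :=
  3 ≤ n ∧ Function.Injective v ∧ (∀ i, IsVertexOf (v i) P) ∧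
    (∀ i, IsEdgeOf (segment ℝ (v i) (v (nxt i))) P) ∧
    γ = ⋃ i, segment ℝ (v i) (v (nxt i))

/-- A simple edge-cycle in the graph of `P`. -/
def IsSimpleEdgeCycle (P γ : Set E3) : Prop :=
  ∃ (n : ℕ) (v : Fin n → E3), IsSimpleEdgeCycleVia P γ v

/-- `C` is a connected component of the set `A`. -/
def IsCompOf (C A : Set E3) : Prop := ∃ x ∈ A, C = connectedComponentIn A x

/-- The loop `L` is obtained by walking round the simple edge-cycle `γ` inside the
connected component `C` of `∂P ∖ γ`: the facets of `L` lie on the side `C`, and the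
edges of `γ`, in cyclic order, lie in the facets of `L` in cyclic order (the loop
index advancing exactly when the facet changes, and making exactly one turn). -/
def WalksRound (P γ C : Set E3) {k : ℕ} (L : Fin k → Set E3) : Prop :=
  IsLoop P L ∧ (∀ i, intrinsicInterior ℝ (L i) ⊆ C) ∧
    ∃ (n : ℕ) (v : Fin n → E3) (φ : Fin n → Fin k),
      IsSimpleEdgeCycleVia P γ v ∧
      (∀ i, segment ℝ (v i) (v (nxt i)) ⊆ L (φ i)) ∧
      (∀ i, φ (nxt i) = φ i ∨ φ (nxt i) = nxt (φ i)) ∧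
      Function.Surjective φ ∧
      (2 ≤ k → (Finset.univ.filter (fun i : Fin n => φ (nxt i) ≠ φ i)).card = k)

/-- Two loops border each other: they are obtained by walking round the same simple
edge-cycle `γ` in the two different connected components of `∂P ∖ γ`. -/
def Borders (P : Set E3) {k₁ k₂ : ℕ} (L₁ : Fin k₁ → Set E3) (L₂ : Fin k₂ → Set E3) : Prop :=
  ∃ γ C₁ C₂ : Set E3, IsCompOf C₁ (frontier P \ γ) ∧ IsCompOf C₂ (frontier P \ γ) ∧
    C₁ ≠ C₂ ∧ WalksRound P γ C₁ L₁ ∧ WalksRound P γ C₂ L₂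

/-- A loop surrounds the facet `F` if it borders the `1`-loop `(F)`. -/
def Surrounds (P : Set E3) {k : ℕ} (L : Fin k → Set E3) (F : Set E3) : Prop :=
  IsFacetOf F P ∧ Borders P L (fun _ : Fin 1 => F)

/-- The number of edges of `P` lying in the facet `F` and in the set `γ`. -/
def edgesInCommon (P F γ : Set E3) : ℕ := {e | IsEdgeOf e P ∧ e ⊆ F ∧ e ⊆ γ}.ncard
/-- A simple 3-polytope all of whose facets are pentagons and hexagons except for
at most one exceptional facet, which is a quadrangle or a heptagon. -/
def IsAlmostFullerene (P : Set E3) : Prop :=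
  IsSimplePolytope3 P ∧
    (∀ F, IsFacetOf F P → facetEdges P F ∈ ({4, 5, 6, 7} : Set ℕ)) ∧
    {F | IsFacetOf F P ∧ (facetEdges P F = 4 ∨ facetEdges P F = 7)}.ncard ≤ 1

/-- The (combinatorial) dodecahedron: a simple 3-polytope with all facets pentagons. -/
def IsDodecahedron (P : Set E3) : Prop :=
  IsSimplePolytope3 P ∧ ∀ F, IsFacetOf F P → facetEdges P F = 5

/-- `e` and `e'` are opposite edges of the hexagonal facet `H`: they are disjoint and no
edge of `H` meets both of them. -/
def OppositeEdges (P H e e' : Set E3) : Prop :=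
  IsEdgeOf e P ∧ IsEdgeOf e' P ∧ e ⊆ H ∧ e' ⊆ H ∧ e ∩ e' = ∅ ∧
    ∀ e'', IsEdgeOf e'' P → e'' ⊆ H → (e'' ∩ e).Nonempty → e'' ≠ e → e'' ∩ e' = ∅

/-- A cap: a pentagonal facet `F₀` together with a surrounding 5-belt of pentagons. -/
def IsCapOf (P F₀ : Set E3) (L : Fin 5 → Set E3) : Prop :=
  IsFacetOf F₀ P ∧ facetEdges P F₀ = 5 ∧ (∀ i, facetEdges P (L i) = 5) ∧
    IsBelt P L ∧ Surrounds P L F₀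

/-- The number of 5-belts of `P` (counted as sets of facets). -/
def fiveBeltCount (P : Set E3) : ℕ :=
  {S : Set (Set E3) | ∃ B : Fin 5 → Set E3, IsBelt P B ∧ S = Set.range B}.ncard

/-- The structure of the `k`-th fullerene of Family I: two caps separated by `k`
hexagonal 5-belts, each bordering the next (for `k = 0` the caps border each other,
giving the dodecahedron). -/
def FamilyI (P : Set E3) (k : ℕ) : Prop :=
  ∃ (F₀ F₀' : Set E3) (L L' : Fin 5 → Set E3) (B : ℕ → Fin 5 → Set E3),
    IsCapOf P F₀ L ∧ IsCapOf P F₀' L' ∧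
    (∀ i < k, IsBelt P (B i) ∧ ∀ j, facetEdges P (B i j) = 6) ∧
    (∀ i, i + 1 < k → Borders P (B i) (B (i + 1))) ∧
    (0 < k → Borders P L (B 0) ∧ Borders P (B (k - 1)) L') ∧
    (k = 0 → Borders P L L') ∧
    facets P = {F₀, F₀'} ∪ Set.range L ∪ Set.range L' ∪ ⋃ i ∈ Set.Iio k, Set.range (B i)

/-- `P` is obtained from `Q` by an `(s,k;t₀,t₁)`-truncation with new edge `Enew`:
`P` is cut off from `Q` by a halfspace `{f ≤ c}` whose boundary plane crosses exactly
two edges `E₀ ≠ E₁` of a `k`-gonal facet `F` of `Q`, cutting off exactly `s` vertices,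
all belonging to `F`; `G₀` and `G₁` are the facets meeting `F` along `E₀` and `E₁`, and
they are `t₀`- and `t₁`-gons; `Enew` is the new edge dividing `F`. -/
def IsTruncation (s k t₀ t₁ : ℕ) (Q P Enew : Set E3) : Prop :=
  IsSimplePolytope3 Q ∧ IsSimplePolytope3 P ∧
    ∃ (F E₀ E₁ G₀ G₁ : Set E3) (f : E3 →ₗ[ℝ] ℝ) (c : ℝ),
      IsFacetOf F Q ∧ facetEdges Q F = k ∧
      IsEdgeOf E₀ Q ∧ IsEdgeOf E₁ Q ∧ E₀ ≠ E₁ ∧ E₀ ⊆ F ∧ E₁ ⊆ F ∧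
      IsFacetOf G₀ Q ∧ IsFacetOf G₁ Q ∧ G₀ ≠ F ∧ G₁ ≠ F ∧ E₀ ⊆ G₀ ∧ E₁ ⊆ G₁ ∧
      facetEdges Q G₀ = t₀ ∧ facetEdges Q G₁ = t₁ ∧
      P = Q ∩ {x | f x ≤ c} ∧
      (∀ e, IsEdgeOf e Q → (∃ x ∈ e, c < f x) → (∃ x ∈ e, f x < c) → e = E₀ ∨ e = E₁) ∧
      (∃ x ∈ E₀, c < f x) ∧ (∃ x ∈ E₀, f x < c) ∧
      (∃ x ∈ E₁, c < f x) ∧ (∃ x ∈ E₁, f x < c) ∧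
      (∀ v, IsVertexOf v Q → f v ≠ c) ∧
      {v | IsVertexOf v Q ∧ c < f v}.ncard = s ∧
      (∀ v, IsVertexOf v Q → c < f v → v ∈ F) ∧
      Enew = F ∩ {x | f x = c}

/-- Combinatorial equivalence of polytopes: an inclusion-preserving bijection
between the sets of faces. -/
def CombEquiv (P Q : Set E3) : Prop :=
  ∃ φ : {A : Set E3 // IsFaceOf A P} ≃ {A : Set E3 // IsFaceOf A Q},
    ∀ A B : {A : Set E3 // IsFaceOf A P}, A.1 ⊆ B.1 ↔ (φ A).1 ⊆ (φ B).1

/-- Combinatorial equivalence sending the face `Ep` of `P` to the face `Eq` of `Q`. -/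
def CombEquivMapping (P Q Ep Eq : Set E3) : Prop :=
  ∃ φ : {A : Set E3 // IsFaceOf A P} ≃ {A : Set E3 // IsFaceOf A Q},
    (∀ A B : {A : Set E3 // IsFaceOf A P}, A.1 ⊆ B.1 ↔ (φ A).1 ⊆ (φ B).1) ∧
    ∀ h : IsFaceOf Ep P, ((φ ⟨Ep, h⟩) : {A : Set E3 // IsFaceOf A Q}).1 = Eq

/-- The straightening of `P` along the edge `E` is defined: `P` is combinatorially
obtained from some simple 3-polytope `Q` by an `(s,k)`-truncation whose new edge
corresponds to `E`. -/
def StraighteningDefined (P E : Set E3) : Prop :=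
  ∃ (s k t₀ t₁ : ℕ) (Q P₁ E₁ : Set E3),
    IsTruncation s k t₀ t₁ Q P₁ E₁ ∧ CombEquivMapping P P₁ E E₁

/-- `P` is obtained from `Q` by one of the truncations
`(1;4,5)`, `(1;5,5)`, `(2,6;4,5)`, `(2,6;5,5)`, `(2,6;5,6)`, `(2,7;5,5)`, `(2,7;5,6)`. -/
def FullereneStep (Q P : Set E3) : Prop :=
  ∃ (s k t₀ t₁ : ℕ) (Enew : Set E3), IsTruncation s k t₀ t₁ Q P Enew ∧
    ((s = 1 ∧ (({t₀, t₁} : Finset ℕ) = {4, 5} ∨ ({t₀, t₁} : Finset ℕ) = {5, 5})) ∨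
     (s = 2 ∧ k = 6 ∧ (({t₀, t₁} : Finset ℕ) = {4, 5} ∨ ({t₀, t₁} : Finset ℕ) = {5, 5} ∨
        ({t₀, t₁} : Finset ℕ) = {5, 6})) ∨
     (s = 2 ∧ k = 7 ∧ (({t₀, t₁} : Finset ℕ) = {5, 5} ∨ ({t₀, t₁} : Finset ℕ) = {5, 6})))


/-! ### Basic facts on faces -/

lemma ext_relint {P F A : Set E3} (hFP : F ⊆ P) (hA : IsExtreme ℝ P A) {x : E3}
    (hx : x ∈ intrinsicInterior ℝ F) (hxA : x ∈ A) : F ⊆ A := by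
  intro y hy
  rw [mem_intrinsicInterior] at hx
  obtain ⟨z, hz, rfl⟩ := hx
  have hyS : y ∈ affineSpan ℝ F := subset_affineSpan ℝ F hy
  let g : ℝ → affineSpan ℝ F := fun t => ⟨AffineMap.lineMap (z : E3) y t,
    AffineMap.lineMap_mem t z.2 hyS⟩
  have hg : Continuous g := by
    refine Continuous.subtype_mk ?_ _
    exact AffineMap.lineMap_continuous
  have hopen : IsOpen (g ⁻¹' (interior ((↑) ⁻¹' F))) := isOpen_interior.preimage hg
  have h0 : (0 : ℝ) ∈ g ⁻¹' (interior ((↑) ⁻¹' F)) := by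
    have : g 0 = z := by
      apply Subtype.ext
      simp [g]
    simp only [mem_preimage, this]
    exact hz
  obtain ⟨ε, hε, hball⟩ := Metric.isOpen_iff.1 hopen 0 h0
  have hmem : g (-(ε/2)) ∈ interior ((↑) ⁻¹' F : Set (affineSpan ℝ F)) := by
    apply hball
    simp [abs_of_pos hε]
    linarith
  have hF : AffineMap.lineMap (z : E3) y (-(ε/2)) ∈ F :=
    interior_subset (s := ((↑) ⁻¹' F : Set (affineSpan ℝ F))) hmem
  refine hA.left_mem_of_mem_openSegment (hFP hy) (hFP hF) hxA ?_
  refine ⟨(ε/2)/(1+ε/2), 1/(1+ε/2), by positivity, by positivity, by field_simp; ring, ?_⟩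
  rw [AffineMap.lineMap_apply]
  simp only [vsub_eq_sub, vadd_eq_add]
  have h1 : (1 + ε/2) ≠ 0 := by positivity
  match_scalars <;> field_simp <;> ring

lemma face_eq_of_subset_of_dim {P F G : Set E3} (hF : IsFaceOf F P) (hG : IsFaceOf G P)
    (hFG : F ⊆ G) (hd : setDim F = setDim G) : F = G := by
  apply Subset.antisymm hFG
  obtain ⟨x, hx⟩ := hF.1.intrinsicInterior hF.2.2.1
  have hxF := intrinsicInterior_subset hx
  have hvs : vectorSpan ℝ F = vectorSpan ℝ G :=
    Submodule.eq_of_le_of_finrank_eq (vectorSpan_mono ℝ hFG) hd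
  have hS : affineSpan ℝ F = affineSpan ℝ G := by
    refine AffineSubspace.eq_of_direction_eq_of_nonempty_of_le ?_ ?_ (affineSpan_mono ℝ hFG)
    · simpa [direction_affineSpan] using hvs
    · exact ⟨x, subset_affineSpan ℝ F hxF⟩
  refine ext_relint hG.2.2.2.subset hF.2.2.2 (x := x) ?_ hxF
  rw [mem_intrinsicInterior] at hx ⊢
  rw [← hS]
  obtain ⟨z, hz, rfl⟩ := hx
  exact ⟨z, interior_mono (preimage_mono hFG) hz, rfl⟩

lemma setDim_mono {A B : Set E3} (h : A ⊆ B) : setDim A ≤ setDim B :=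
  Submodule.finrank_mono (vectorSpan_mono ℝ h)

lemma face_inter {P F G : Set E3} (hF : IsFaceOf F P) (hG : IsFaceOf G P)
    (h : (F ∩ G).Nonempty) : IsFaceOf (F ∩ G) P :=
  ⟨h, hF.2.1.inter hG.2.1, hF.2.2.1.inter hG.2.2.1, hF.2.2.2.inter hG.2.2.2⟩

/-- A face of a polytope is the convex hull of the generators it contains. -/
lemma face_eq_hull {V : Finset E3} {F : Set E3} (hFc : Convex ℝ F)
    (hF : IsExtreme ℝ (convexHull ℝ (V : Set E3)) F) :
    F = convexHull ℝ ((V : Set E3) ∩ F) := by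
  apply Subset.antisymm
  · intro x hx
    have hxP := hF.subset hx
    rw [Finset.mem_convexHull'] at hxP
    obtain ⟨w, hw0, hw1, hwx⟩ := hxP
    have key : ∀ y ∈ V, w y ≠ 0 → y ∈ F := by
      intro y hy hwy
      have hpos : 0 < w y := lt_of_le_of_ne (hw0 y hy) (Ne.symm hwy)
      by_cases h1 : w y = 1
      · have hz : ∀ z ∈ V.erase y, w z = 0 := by
          have := Finset.add_sum_erase V w hy
          rw [hw1, h1] at this
          have h0 : ∑ z ∈ V.erase y, w z = 0 := by linarith
          exact (Finset.sum_eq_zero_iff_of_nonneg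
            (fun z hz => hw0 z (Finset.mem_of_mem_erase hz))).1 h0
        have : x = y := by
          rw [← hwx, ← Finset.add_sum_erase V _ hy, h1,
            Finset.sum_eq_zero (fun z hz' => by rw [hz z hz', zero_smul])]
          simp
        rwa [← this]
      · have hsum := Finset.add_sum_erase V w hy
        rw [hw1] at hsum
        have hle : 0 ≤ ∑ z ∈ V.erase y, w z :=
          Finset.sum_nonneg (fun z hz => hw0 z (Finset.mem_of_mem_erase hz))
        have hpos' : 0 < ∑ z ∈ V.erase y, w z := by
          rcases hle.lt_or_eq with h | h
          · exact h
          · exfalso; apply h1; linarith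
        have hq : (V.erase y).centerMass w id ∈ convexHull ℝ (V : Set E3) := by
          apply Finset.centerMass_mem_convexHull
          · exact fun z hz => hw0 z (Finset.mem_of_mem_erase hz)
          · exact hpos'
          · exact fun z hz => Finset.mem_of_mem_erase hz
        refine hF.left_mem_of_mem_openSegment (subset_convexHull ℝ _ hy) hq hx ?_
        refine ⟨w y, ∑ z ∈ V.erase y, w z, hpos, hpos', hsum, ?_⟩
        rw [Finset.centerMass, smul_smul, mul_inv_cancel₀ hpos'.ne', one_smul]
        simp only [id]
        rw [Finset.add_sum_erase V (fun z => w z • z) hy, hwx]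
    have : x = V.centerMass w id := by
      rw [Finset.centerMass_eq_of_sum_1 _ _ hw1, ← hwx]; rfl
    rw [this, ← Finset.centerMass_filter_ne_zero]
    apply Finset.centerMass_mem_convexHull
    · exact fun z hz => hw0 z (Finset.mem_of_mem_filter _ hz)
    · rw [Finset.sum_filter_ne_zero, hw1]; exact one_pos
    · intro z hz
      rw [Finset.mem_filter] at hz
      exact ⟨hz.1, key z hz.1 hz.2⟩
  · exact convexHull_min inter_subset_right hFc


lemma dim_hull (S : Set E3) : setDim (convexHull ℝ S) = setDim S := by
  unfold setDim
  rw [← direction_affineSpan, affineSpan_convexHull, direction_affineSpan]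

lemma exposed_isExtreme {P : Set E3} {f : E3 →L[ℝ] ℝ} {c : ℝ} (h : ∀ x ∈ P, f x ≤ c) :
    IsExtreme ℝ P (P ∩ {x | f x = c}) := by
  refine ⟨inter_subset_left, ?_⟩
  rintro x hx y hy z ⟨hz, hzc⟩ ⟨a, b, ha, hb, hab, rfl⟩
  refine ⟨hx, ?_⟩
  have h1 := h x hx
  have h2 := h y hy
  simp only [mem_ofPred_eq, map_add, map_smul, smul_eq_mul] at hzc ⊢
  obtain rfl : b = 1 - a := by linarith
  apply le_antisymm h1
  by_contra hlt
  push Not at hlt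
  nlinarith

lemma poly_affineSpan_top {P : Set E3} (hd : setDim P = 3) : vectorSpan ℝ P = ⊤ := by
  apply Submodule.eq_top_of_finrank_eq
  rw [show Module.finrank ℝ (vectorSpan ℝ P) = 3 from hd]
  simp

lemma poly_interior {V : Finset E3} (hd : setDim (convexHull ℝ (V : Set E3)) = 3) :
    (interior (convexHull ℝ (V : Set E3))).Nonempty := by
  rw [interior_convexHull_nonempty_iff_affineSpan_eq_top]
  rw [dim_hull] at hd
  have h := poly_affineSpan_top hd
  have hne : (V : Set E3).Nonempty := by
    by_contra h0
    rw [not_nonempty_iff_eq_empty] at h0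
    rw [h0] at hd
    unfold setDim at hd
    rw [vectorSpan_empty, finrank_bot] at hd
    omega
  rwa [AffineSubspace.affineSpan_eq_top_iff_vectorSpan_eq_top_of_nonempty ℝ E3 E3 hne]

/-- Every point outside of a polytope is strictly separated from it by an exposed facet. -/
lemma exists_facet_sep {V : Finset E3} (hd : setDim (convexHull ℝ (V : Set E3)) = 3)
    {x : E3} (hx : x ∉ convexHull ℝ (V : Set E3)) :
    ∃ (F : Set E3) (f : E3 →L[ℝ] ℝ) (c : ℝ), IsFacetOf F (convexHull ℝ (V : Set E3)) ∧
      (∀ y ∈ convexHull ℝ (V : Set E3), f y ≤ c) ∧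
      F = convexHull ℝ (V : Set E3) ∩ {y | f y = c} ∧
      ∃ p ∈ interior (convexHull ℝ (V : Set E3)), ∃ y ∈ F, ∃ a b : ℝ, 0 < a ∧ 0 < b ∧ a + b = 1 ∧
        a • p + b • x = y := by
  classical
  set P := convexHull ℝ (V : Set E3) with hPdef
  have hPc : Convex ℝ P := convex_convexHull ℝ _
  have hPcl : IsClosed P := (V.finite_toSet.isCompact_convexHull (𝕜 := ℝ)).isClosed
  have hIntr := poly_interior hd
  -- a generic interior point
  obtain ⟨p, hp, hgen⟩ : ∃ p ∈ interior P, ∀ S ∈ V.powerset, setDim (S : Set E3) ≤ 1 →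
      p ∉ affineSpan ℝ (insert x (S : Set E3)) := by
    by_contra hcon
    push Not at hcon
    have hsub : interior P ⊆ ⋃ S ∈ {S | S ∈ V.powerset ∧ setDim (S : Set E3) ≤ 1},
        (affineSpan ℝ (insert x (S : Set E3)) : Set E3) := by
      intro p hp
      obtain ⟨S, hS, h1, h2⟩ := hcon p hp
      exact mem_biUnion (show S ∈ {S | S ∈ V.powerset ∧ setDim (S : Set E3) ≤ 1}
        from ⟨hS, h1⟩) h2
    have hz : MeasureTheory.volume (⋃ S ∈ {S | S ∈ V.powerset ∧ setDim (S : Set E3) ≤ 1},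
        (affineSpan ℝ (insert x (S : Set E3)) : Set E3)) = 0 := by
      rw [MeasureTheory.measure_biUnion_null_iff]
      · rintro S ⟨hS, h1⟩
        apply MeasureTheory.Measure.addHaar_affineSubspace
        intro htop
        have h2 := finrank_vectorSpan_insert_le_set ℝ (S : Set E3) x
        rw [← direction_affineSpan, htop, AffineSubspace.direction_top, finrank_top] at h2
        have h3 : Module.finrank ℝ E3 = 3 := by simp
        unfold setDim at h1
        omega
      · apply Set.Finite.countable
        exact (V.powerset.finite_toSet).subset (fun S hS => hS.1)
    have := isOpen_interior.measure_pos MeasureTheory.volume hIntr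
    exact this.ne' (MeasureTheory.measure_mono_null hsub hz)
  have hpP : p ∈ P := interior_subset hp
  -- a frontier point on the segment
  obtain ⟨y, hyseg, hyP, hyint⟩ : ∃ y ∈ segment ℝ p x, y ∈ P ∧ y ∉ interior P := by
    by_contra hcon
    push Not at hcon
    have hpre : IsPreconnected (segment ℝ p x) := (convex_segment p x).isPreconnected
    obtain ⟨z, -, hz1, hz2⟩ := hpre (interior P) Pᶜ isOpen_interior hPcl.isOpen_compl
      (fun z hz => by
        by_cases h : z ∈ P
        · exact Or.inl (hcon z hz h)
        · exact Or.inr h)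
      ⟨p, left_mem_segment _ _ _, hp⟩ ⟨x, right_mem_segment _ _ _, hx⟩
    exact hz2 (interior_subset hz1)
  obtain ⟨f, hf⟩ := geometric_hahn_banach_open_point hPc.interior isOpen_interior hyint
  have hfle : ∀ z ∈ P, f z ≤ f y := by
    intro z hz
    have hcl : z ∈ closure (interior P) := by
      rw [hPc.closure_interior_eq_closure_of_nonempty_interior hIntr]
      exact subset_closure hz
    exact closure_minimal (t := {z | f z ≤ f y}) (fun w hw => (hf w hw).le)
      (isClosed_le f.continuous continuous_const) hcl
  obtain ⟨a, b, ha, hb, hab, hy⟩ := hyseg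
  have hfp := hf p hp
  have hb0 : b ≠ 0 := by
    rintro rfl
    have : a = 1 := by linarith
    subst this
    simp at hy
    rw [hy] at hfp
    exact lt_irrefl _ hfp
  have ha0 : a ≠ 0 := by
    rintro rfl
    have : b = 1 := by linarith
    subst this
    simp at hy
    exact hx (hy ▸ hyP)
  have hbpos : 0 < b := lt_of_le_of_ne hb (Ne.symm hb0)
  have hapos : 0 < a := lt_of_le_of_ne ha (Ne.symm ha0)
  have hfx : f y < f x := by
    have h1 : f y = a * f p + b * f x := by rw [← hy]; simp
    obtain rfl : b = 1 - a := by linarith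
    nlinarith
  set F := P ∩ {z | f z = f y} with hFdef
  have hFext : IsExtreme ℝ P F := exposed_isExtreme hfle
  have hFc : Convex ℝ F := hPc.inter (convex_hyperplane f.isLinear _)
  have hyF : y ∈ F := ⟨hyP, rfl⟩
  have hface : IsFaceOf F P :=
    ⟨⟨y, hyF⟩, hPcl.inter (isClosed_eq f.continuous continuous_const), hFc, hFext⟩
  refine ⟨F, f, f y, ⟨hface, ?_⟩, hfle, rfl,
    p, hp, y, hyF, a, b, hapos, hbpos, hab, hy⟩
  have hhull := face_eq_hull hFc hFext
  apply le_antisymm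
  · have hle : vectorSpan ℝ F ≤ LinearMap.ker (f : E3 →ₗ[ℝ] ℝ) := by
      rw [vectorSpan_def, Submodule.span_le]
      rintro _ ⟨z, hz, w, hw, rfl⟩
      have h1 : f z = f y := hz.2
      have h2 : f w = f y := hw.2
      simp [h1, h2]
    have hne : LinearMap.ker (f : E3 →ₗ[ℝ] ℝ) ≠ ⊤ := by
      intro h
      rw [LinearMap.ker_eq_top] at h
      have : f = 0 := by
        ext z
        exact congrArg (fun g : E3 →ₗ[ℝ] ℝ => g z) h
      rw [this] at hfx
      simp at hfx
    have h1 := Submodule.finrank_mono hle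
    have h2 := Submodule.finrank_lt hne
    have h3 : Module.finrank ℝ E3 = 3 := by simp
    unfold setDim
    omega
  · by_contra hlt
    push Not at hlt
    rw [hhull, dim_hull] at hlt
    let S : Finset E3 := V.filter (fun z => z ∈ F)
    have hS : (S : Set E3) = (V : Set E3) ∩ F := by
      ext z; simp [S]
    rw [← hS] at hlt hhull
    refine hgen S (by simp [S]) (by omega) ?_
    have hyA : y ∈ affineSpan ℝ (insert x (S : Set E3)) := by
      apply affineSpan_mono ℝ (subset_insert x _)
      apply convexHull_subset_affineSpan
      rw [← hhull]; exact hyF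
    have hxA : x ∈ affineSpan ℝ (insert x (S : Set E3)) :=
      subset_affineSpan ℝ _ (mem_insert _ _)
    have hpl : p = AffineMap.lineMap x y (1/a) := by
      rw [AffineMap.lineMap_apply, ← hy]
      simp only [vsub_eq_sub, vadd_eq_add]
      obtain rfl : b = 1 - a := by linarith
      match_scalars <;> field_simp
      ring
    rw [hpl]
    exact AffineMap.lineMap_mem _ hxA hyA

/-- The facial description of a polytope. -/
structure HDat (P : Set E3) where
  f : Set E3 → (E3 →L[ℝ] ℝ)
  c : Set E3 → ℝ
  le : ∀ F, IsFacetOf F P → ∀ x ∈ P, f F x ≤ c F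
  mem : ∀ F, IsFacetOf F P → ∀ x, x ∈ F ↔ x ∈ P ∧ f F x = c F
  hrep : ∀ x, (∀ F, IsFacetOf F P → f F x ≤ c F) → x ∈ P

lemma faces_finite {P : Set E3} (hP : IsPolytope P) : {F | IsFaceOf F P}.Finite := by
  obtain ⟨V, rfl⟩ := hP
  refine ((V.finite_toSet.finite_subsets).image (fun S => convexHull ℝ S)).subset ?_
  intro F hF
  exact ⟨(V : Set E3) ∩ F, inter_subset_left, (face_eq_hull hF.2.2.1 hF.2.2.2).symm⟩

lemma facets_finite {P : Set E3} (hP : IsPolytope P) : {F | IsFacetOf F P}.Finite :=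
  (faces_finite hP).subset (fun _ h => h.1)

lemma face_not_interior {P F : Set E3} (hF : IsFaceOf F P) (hd : setDim F < setDim P) {x : E3}
    (hx : x ∈ F) : x ∉ interior P := by
  intro hi
  have := ext_relint (F := P) subset_rfl hF.2.2.2 (interior_subset_intrinsicInterior hi) hx
  have := setDim_mono this
  omega

lemma mem_interior_of_strict {P : Set E3} (S : Set (Set E3)) (hS : S.Finite)
    (f : Set E3 → (E3 →L[ℝ] ℝ)) (c : Set E3 → ℝ)
    (hrep : ∀ x, (∀ F ∈ S, f F x ≤ c F) → x ∈ P) {x : E3} (hx : ∀ F ∈ S, f F x < c F) :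
    x ∈ interior P := by
  rw [mem_interior]
  refine ⟨⋂ F ∈ S, {y | f F y < c F}, ?_, ?_, ?_⟩
  · intro y hy
    apply hrep
    intro F hF
    exact le_of_lt (mem_iInter₂.1 hy F hF)
  · exact hS.isOpen_biInter (fun F _ => isOpen_lt (f F).continuous continuous_const)
  · exact mem_iInter₂.2 hx

lemma exists_hdat {P : Set E3} (hP : IsPolytope P) (hd : setDim P = 3) : Nonempty (HDat P) := by
  classical
  have hfin := facets_finite hP
  obtain ⟨V, rfl⟩ := hP
  set P := convexHull ℝ (V : Set E3) with hPdef
  let Q : Set E3 → (E3 →L[ℝ] ℝ) → ℝ → Prop := fun F f c =>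
    IsFacetOf F P ∧ (∀ y ∈ P, f y ≤ c) ∧ F = P ∩ {y | f y = c}
  -- all facets are exposed
  let S : Set (Set E3) := {F | ∃ f c, Q F f c}
  have hSfin : S.Finite := hfin.subset (fun F ⟨f, c, h⟩ => h.1)
  have hex : ∀ F, ∃ f c, F ∈ S → Q F f c := by
    intro F
    by_cases h : F ∈ S
    · obtain ⟨f, c, h'⟩ := h
      exact ⟨f, c, fun _ => h'⟩
    · exact ⟨0, 0, fun h' => absurd h' h⟩
  choose f c hfc using hex
  have hrep : ∀ x, (∀ F ∈ S, f F x ≤ c F) → x ∈ P := by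
    intro x hx
    by_contra hxP
    obtain ⟨F, g, d, h1, h2, h3, p, hp, y, hyF, a, b, ha, hb, hab, hy⟩ := exists_facet_sep hd hxP
    have hFS : F ∈ S := ⟨g, d, h1, h2, h3⟩
    obtain ⟨q1, q2, q3⟩ := hfc F hFS
    have hpF : p ∉ F := fun h =>
      face_not_interior h1.1 (by rw [h1.2, hd]; norm_num) h hp
    have hpP : p ∈ P := interior_subset hp
    have hlt : f F p < c F := by
      apply lt_of_le_of_ne (q2 p hpP)
      intro h
      apply hpF
      rw [q3]
      exact ⟨hpP, h⟩
    have hfy : f F y = c F := by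
      rw [q3] at hyF
      exact hyF.2
    have hfy2 : f F y = a * f F p + b * f F x := by rw [← hy]; simp
    have hxF := hx F hFS
    obtain rfl : b = 1 - a := by linarith
    nlinarith
  have hall : ∀ F, IsFacetOf F P → F ∈ S := by
    intro F hF
    obtain ⟨x, hx⟩ := hF.1.1.intrinsicInterior hF.1.2.2.1
    have hxF := intrinsicInterior_subset hx
    have hni := face_not_interior hF.1 (by rw [hF.2, hd]; norm_num) hxF
    have : ∃ G ∈ S, c G ≤ f G x := by
      by_contra hcon
      push Not at hcon
      exact hni (mem_interior_of_strict S hSfin f c hrep hcon)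
    obtain ⟨G, hG, hle⟩ := this
    obtain ⟨q1, q2, q3⟩ := hfc G hG
    have hxP : x ∈ P := hF.1.2.2.2.subset hxF
    have hxG : x ∈ G := by
      rw [q3]
      exact ⟨hxP, le_antisymm (q2 x hxP) hle⟩
    have hFG := ext_relint hF.1.2.2.2.subset q1.1.2.2.2 hx hxG
    rwa [face_eq_of_subset_of_dim hF.1 q1.1 hFG (by rw [hF.2, q1.2])]
  refine ⟨⟨f, c, ?_, ?_, ?_⟩⟩
  · intro F hF x hx
    exact (hfc F (hall F hF)).2.1 x hx
  · intro F hF x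
    have := (hfc F (hall F hF)).2.2
    constructor
    · intro hx
      rw [this] at hx
      exact hx
    · intro hx
      rw [this]
      exact hx
  · intro x hx
    exact hrep x (fun F hF => hx F (hfc F hF).1)

/-! ### Local structure of simple polytopes -/

open Topology in
lemma wiggle_ev {P : Set E3} (D : HDat P) (hP : IsPolytope P) {y d : E3} (hy : y ∈ P)
    (hd : ∀ F, IsFacetOf F P → y ∈ F → D.f F d ≤ 0) :
    ∀ᶠ t in 𝓝[>] (0 : ℝ), y + t • d ∈ P := by
  have h : ∀ᶠ t in 𝓝[>] (0 : ℝ), ∀ F ∈ {F | IsFacetOf F P}, D.f F (y + t • d) ≤ D.c F := by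
    rw [Filter.eventually_all_finite (facets_finite hP)]
    intro F hF
    have hF' : IsFacetOf F P := hF
    by_cases hyF : y ∈ F
    · filter_upwards [self_mem_nhdsWithin] with t ht
      have ht' : 0 < t := ht
      have h1 := hd F hF' hyF
      have h2 := ((D.mem F hF' y).1 hyF).2
      rw [map_add, map_smul, h2, smul_eq_mul]
      nlinarith
    · have hlt : D.f F y < D.c F := by
        apply lt_of_le_of_ne (D.le F hF' y hy)
        intro h
        exact hyF ((D.mem F hF' y).2 ⟨hy, h⟩)
      apply Filter.Eventually.filter_mono nhdsWithin_le_nhds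
      have hc : Continuous (fun t : ℝ => D.f F (y + t • d)) := by fun_prop
      have := hc.tendsto 0
      simp only [zero_smul, add_zero] at this
      filter_upwards [this.eventually_lt_const hlt] with t ht
      exact ht.le
  filter_upwards [h] with t ht
  exact D.hrep _ (fun F hF => ht F hF)

lemma wiggle1 {P : Set E3} (D : HDat P) (hP : IsPolytope P) {y d : E3} (hy : y ∈ P)
    (hd : ∀ F, IsFacetOf F P → y ∈ F → D.f F d ≤ 0) :
    ∃ t : ℝ, 0 < t ∧ y + t • d ∈ P := by
  obtain ⟨t, h1, h2⟩ := ((wiggle_ev D hP hy hd).and self_mem_nhdsWithin).exists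
  exact ⟨t, h2, h1⟩

lemma wiggle2 {P : Set E3} (D : HDat P) (hP : IsPolytope P) {A : Set E3} (hA : IsExtreme ℝ P A)
    {y d : E3} (hy : y ∈ A) (hd : ∀ F, IsFacetOf F P → y ∈ F → D.f F d = 0) :
    ∃ t : ℝ, 0 < t ∧ y + t • d ∈ A := by
  have hyP := hA.subset hy
  have h1 := wiggle_ev D hP hyP (d := d) (fun F hF h => (hd F hF h).le)
  have h2 := wiggle_ev D hP hyP (d := -d) (fun F hF h => by simp [hd F hF h])
  obtain ⟨t, ⟨h1, h2⟩, h3⟩ := ((h1.and h2).and self_mem_nhdsWithin).exists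
  refine ⟨t, h3, hA.left_mem_of_mem_openSegment h1 h2 hy ?_⟩
  refine ⟨1/2, 1/2, by norm_num, by norm_num, by norm_num, ?_⟩
  module

lemma vertex_inj {P : Set E3} (D : HDat P) (hP : IsPolytope P) {w d : E3} (hw : IsVertexOf w P)
    (hd : ∀ F, IsFacetOf F P → w ∈ F → D.f F d = 0) : d = 0 := by
  obtain ⟨t, ht, h⟩ := wiggle2 D hP hw.2.2.2 (mem_singleton w) hd
  have : t • d = 0 := by simpa using h
  exact (smul_eq_zero.1 this).resolve_left ht.ne'

lemma exists_three {P : Set E3} (hP : IsSimplePolytope3 P) {w : E3} (hw : IsVertexOf w P) :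
    ∃ F G H, F ≠ G ∧ F ≠ H ∧ G ≠ H ∧ ∀ K, (IsFacetOf K P ∧ w ∈ K) ↔ K = F ∨ K = G ∨ K = H := by
  obtain ⟨F, G, H, h1, h2, h3, h⟩ := Set.ncard_eq_three.1 (hP.2.2 w hw)
  refine ⟨F, G, H, h1, h2, h3, fun K => ?_⟩
  have : K ∈ {F | IsFacetOf F P ∧ w ∈ F} ↔ K ∈ ({F, G, H} : Set (Set E3)) := by rw [h]
  simpa using this

/-- The predicate that `F, G, H` are the three distinct facets at the vertex `w`. -/
structure Trip (P : Set E3) (w : E3) (F G H : Set E3) : Prop where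
  vert : IsVertexOf w P
  fF : IsFacetOf F P
  fG : IsFacetOf G P
  fH : IsFacetOf H P
  mF : w ∈ F
  mG : w ∈ G
  mH : w ∈ H
  FG : F ≠ G
  FH : F ≠ H
  GH : G ≠ H
  all : ∀ K, IsFacetOf K P → w ∈ K → K = F ∨ K = G ∨ K = H

lemma Trip.rot {P F G H : Set E3} {w : E3} (h : Trip P w F G H) : Trip P w G H F :=
  ⟨h.vert, h.fG, h.fH, h.fF, h.mG, h.mH, h.mF, h.GH, h.FG.symm, h.FH.symm,
    fun K h1 h2 => by have := h.all K h1 h2; tauto⟩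

lemma Trip.swap {P F G H : Set E3} {w : E3} (h : Trip P w F G H) : Trip P w F H G :=
  ⟨h.vert, h.fF, h.fH, h.fG, h.mF, h.mH, h.mG, h.FH, h.FG, h.GH.symm,
    fun K h1 h2 => by have := h.all K h1 h2; tauto⟩

lemma trip_mk {P F G H : Set E3} (hP : IsSimplePolytope3 P) {w : E3} (hw : IsVertexOf w P)
    (hF : IsFacetOf F P) (hG : IsFacetOf G P) (hH : IsFacetOf H P) (mF : w ∈ F) (mG : w ∈ G)
    (mH : w ∈ H) (FG : F ≠ G) (FH : F ≠ H) (GH : G ≠ H) : Trip P w F G H := by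
  refine ⟨hw, hF, hG, hH, mF, mG, mH, FG, FH, GH, ?_⟩
  obtain ⟨A, B, C, h1, h2, h3, h⟩ := exists_three hP hw
  intro K hK hwK
  have a1 := (h F).1 ⟨hF, mF⟩
  have a2 := (h G).1 ⟨hG, mG⟩
  have a3 := (h H).1 ⟨hH, mH⟩
  have a4 := (h K).1 ⟨hK, hwK⟩
  grind

lemma trip_of_vertex {P : Set E3} (hP : IsSimplePolytope3 P) {w : E3} (hw : IsVertexOf w P) :
    ∃ F G H, Trip P w F G H := by
  obtain ⟨A, B, C, h1, h2, h3, h⟩ := exists_three hP hw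
  have a1 := (h A).2 (by simp)
  have a2 := (h B).2 (by simp)
  have a3 := (h C).2 (by simp)
  exact ⟨A, B, C, hw, a1.1, a2.1, a3.1, a1.2, a2.2, a3.2, h1, h2, h3,
    fun K hK hw => (h K).1 ⟨hK, hw⟩⟩

lemma trip_of_one {P F : Set E3} (hP : IsSimplePolytope3 P) {w : E3} (hw : IsVertexOf w P)
    (hF : IsFacetOf F P) (mF : w ∈ F) : ∃ G H, Trip P w F G H := by
  obtain ⟨A, B, C, h⟩ := trip_of_vertex hP hw
  rcases h.all F hF mF with rfl | rfl | rfl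
  · exact ⟨_, _, h⟩
  · exact ⟨_, _, h.rot⟩
  · exact ⟨_, _, h.rot.rot⟩

lemma trip_of_two {P F G : Set E3} (hP : IsSimplePolytope3 P) {w : E3} (hw : IsVertexOf w P)
    (hF : IsFacetOf F P) (mF : w ∈ F) (hG : IsFacetOf G P) (mG : w ∈ G) (hFG : F ≠ G) :
    ∃ H, Trip P w F G H := by
  obtain ⟨B, C, h⟩ := trip_of_one hP hw hF mF
  rcases h.all G hG mG with rfl | rfl | rfl
  · exact absurd rfl hFG
  · exact ⟨_, h⟩
  · exact ⟨_, h.swap⟩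

lemma Trip.inj {P F G H : Set E3} {w : E3} (h : Trip P w F G H) (D : HDat P) (hP : IsPolytope P)
    {d : E3} (h1 : D.f F d = 0) (h2 : D.f G d = 0) (h3 : D.f H d = 0) : d = 0 := by
  refine vertex_inj D hP h.vert (fun K hK hw => ?_)
  rcases h.all K hK hw with rfl | rfl | rfl <;> assumption

lemma Trip.solve {P F G H : Set E3} {w : E3} (h : Trip P w F G H) (D : HDat P) (hP : IsPolytope P)
    (a b c : ℝ) : ∃ d, D.f F d = a ∧ D.f G d = b ∧ D.f H d = c := by
  let T : E3 →ₗ[ℝ] (Fin 3 → ℝ) := LinearMap.pi ![(D.f F : E3 →ₗ[ℝ] ℝ), (D.f G : E3 →ₗ[ℝ] ℝ),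
    (D.f H : E3 →ₗ[ℝ] ℝ)]
  have hT : Function.Injective T := by
    rw [injective_iff_map_eq_zero]
    intro d hd
    have h0 := congrFun hd 0
    have h1 := congrFun hd 1
    have h2 := congrFun hd 2
    exact h.inj D hP h0 h1 h2
  have hs : Function.Surjective T :=
    (LinearMap.injective_iff_surjective_of_finrank_eq_finrank (by simp)).1 hT
  obtain ⟨d, hd⟩ := hs ![a, b, c]
  exact ⟨d, congrFun hd 0, congrFun hd 1, congrFun hd 2⟩

lemma facet_mem_sub {P F : Set E3} (D : HDat P) (hF : IsFacetOf F P) {x y : E3} (hx : x ∈ F)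
    (hy : y ∈ F) : D.f F (x - y) = 0 := by
  rw [map_sub, ((D.mem F hF x).1 hx).2, ((D.mem F hF y).1 hy).2, sub_self]

lemma Trip.inter_eq {P F G H : Set E3} {w : E3} (h : Trip P w F G H) (D : HDat P)
    (hP : IsPolytope P) {x : E3} (hF : x ∈ F) (hG : x ∈ G) (hH : x ∈ H) : x = w :=
  sub_eq_zero.1 (h.inj D hP (facet_mem_sub D h.fF hF h.mF) (facet_mem_sub D h.fG hG h.mG)
    (facet_mem_sub D h.fH hH h.mH))

lemma Trip.edge {P F G H : Set E3} {w : E3} (h : Trip P w F G H) (D : HDat P)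
    (hP : IsPolytope P) : IsEdgeOf (F ∩ G) P := by
  refine ⟨face_inter h.fF.1 h.fG.1 ⟨w, h.mF, h.mG⟩, ?_⟩
  obtain ⟨d, d1, d2, d3⟩ := h.solve D hP 0 0 (-1)
  have hwP : w ∈ P := h.vert.2.2.2.subset rfl
  obtain ⟨t, ht, htP⟩ := wiggle1 D hP (y := w) (d := d) hwP (fun K hK hw => by
    rcases h.all K hK hw with rfl | rfl | rfl <;> linarith)
  have hd0 : d ≠ 0 := by
    rintro rfl
    simp at d3
  have hm : w + t • d ∈ F ∩ G := by
    refine ⟨(D.mem F h.fF _).2 ⟨htP, ?_⟩, (D.mem G h.fG _).2 ⟨htP, ?_⟩⟩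
    · rw [map_add, map_smul, d1, ((D.mem F h.fF w).1 h.mF).2]; simp
    · rw [map_add, map_smul, d2, ((D.mem G h.fG w).1 h.mG).2]; simp
  have hspan : vectorSpan ℝ (F ∩ G) = Submodule.span ℝ {d} := by
    apply le_antisymm
    · rw [vectorSpan_def, Submodule.span_le]
      rintro _ ⟨x, hx, y, hy, rfl⟩
      simp only [vsub_eq_sub, SetLike.mem_coe]
      rw [Submodule.mem_span_singleton]
      refine ⟨- D.f H (x - y), ?_⟩
      apply Eq.symm
      rw [← sub_eq_zero]
      refine h.inj D hP ?_ ?_ ?_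
      · rw [map_sub, map_smul, d1, facet_mem_sub D h.fF hx.1 hy.1]; simp
      · rw [map_sub, map_smul, d2, facet_mem_sub D h.fG hx.2 hy.2]; simp
      · rw [map_sub, map_smul, d3]; simp
    · rw [Submodule.span_singleton_le_iff_mem]
      have : t • d ∈ vectorSpan ℝ (F ∩ G) := by
        have := vsub_mem_vectorSpan ℝ hm (show w ∈ F ∩ G from ⟨h.mF, h.mG⟩)
        simpa using this
      have h2 := Submodule.smul_mem _ t⁻¹ this
      rwa [smul_smul, inv_mul_cancel₀ ht.ne', one_smul] at h2
  unfold setDim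
  rw [hspan, finrank_span_singleton hd0]

lemma poly_compact {P : Set E3} (hP : IsPolytope P) : IsCompact P := by
  obtain ⟨V, rfl⟩ := hP
  exact V.finite_toSet.isCompact_convexHull (𝕜 := ℝ)

lemma face_compact {P A : Set E3} (hP : IsPolytope P) (hA : IsFaceOf A P) : IsCompact A :=
  (poly_compact hP).of_isClosed_subset hA.2.1 hA.2.2.2.subset

lemma vertex_of_extreme {P A : Set E3} (hA : IsFaceOf A P) {w : E3}
    (hw : w ∈ A.extremePoints ℝ) : IsVertexOf w P :=
  ⟨singleton_nonempty w, isClosed_singleton, convex_singleton w,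
    hA.2.2.2.trans (isExtreme_singleton.2 hw)⟩

lemma exists_vertex {P A : Set E3} (hP : IsPolytope P) (hA : IsFaceOf A P) :
    ∃ w ∈ A, IsVertexOf w P := by
  obtain ⟨w, hw⟩ := (face_compact hP hA).extremePoints_nonempty hA.1
  exact ⟨w, hw.1, vertex_of_extreme hA hw⟩

lemma inter_edge {P F G : Set E3} (hP : IsSimplePolytope3 P) (D : HDat P) (hF : IsFacetOf F P)
    (hG : IsFacetOf G P) (hFG : F ≠ G) (hne : (F ∩ G).Nonempty) : IsEdgeOf (F ∩ G) P := by
  obtain ⟨w, hw, hv⟩ := exists_vertex hP.1 (face_inter hF.1 hG.1 hne)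
  obtain ⟨H, h⟩ := trip_of_two hP hv hF hw.1 hG hw.2 hFG
  exact h.edge D hP.1

lemma triple_vertex {P F G H : Set E3} (hP : IsSimplePolytope3 P) (hF : IsFacetOf F P)
    (hG : IsFacetOf G P) (hH : IsFacetOf H P) (FG : F ≠ G) (FH : F ≠ H) (GH : G ≠ H)
    (hne : (F ∩ G ∩ H).Nonempty) : ∃ w, Trip P w F G H := by
  have hne2 : (F ∩ G).Nonempty := hne.mono inter_subset_left
  obtain ⟨w, hw, hv⟩ := exists_vertex hP.1 (face_inter (face_inter hF.1 hG.1 hne2) hH.1 hne)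
  exact ⟨w, trip_mk hP hv hF hG hH hw.1.1 hw.1.2 hw.2 FG FH GH⟩

lemma edge_seg {P e : Set E3} (hP : IsPolytope P) (he : IsEdgeOf e P) :
    ∃ a b, a ≠ b ∧ IsVertexOf a P ∧ IsVertexOf b P ∧ e = segment ℝ a b := by
  obtain ⟨⟨hne, hcl, hcv, hext⟩, hdim⟩ := he
  have hcomp := face_compact hP ⟨hne, hcl, hcv, hext⟩
  unfold setDim at hdim
  obtain ⟨⟨d, hd⟩, hd0, hspan⟩ := finrank_eq_one_iff'.1 hdim
  have hd0' : d ≠ 0 := fun h => hd0 (by ext1; exact h)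
  have hline : ∀ x ∈ e, ∀ y ∈ e, ∃ t : ℝ, y = x + t • d := by
    intro x hx y hy
    obtain ⟨t, ht⟩ := hspan ⟨y - x, vsub_mem_vectorSpan ℝ hy hx⟩
    refine ⟨t, ?_⟩
    have := congrArg Subtype.val ht
    simp at this
    rw [this]; abel
  let g : E3 → ℝ := fun x => inner ℝ d x
  have hg : Continuous g := by fun_prop
  have hdd : 0 < inner ℝ d d := real_inner_self_pos.2 hd0'
  have hgl : ∀ (x : E3) (t : ℝ), g (x + t • d) = g x + t * inner ℝ d d := by
    intro x t
    simp only [g, inner_add_right, inner_smul_right]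
  have ginj : ∀ x ∈ e, ∀ y ∈ e, g x = g y → x = y := by
    intro x hx y hy hxy
    obtain ⟨t, rfl⟩ := hline x hx y hy
    rw [hgl] at hxy
    have : t = 0 := by
      rcases mul_eq_zero.1 (show t * inner ℝ d d = 0 by linarith) with h | h
      · exact h
      · exact absurd h hdd.ne'
    simp [this]
  have gcomb : ∀ (p q : ℝ) (x y : E3), g (p • x + q • y) = p * g x + q * g y := by
    intro p q x y
    simp only [g, inner_add_right, inner_smul_right]
  obtain ⟨a, ha, hamin⟩ := hcomp.exists_isMinOn hne hg.continuousOn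
  obtain ⟨b, hb, hbmax⟩ := hcomp.exists_isMaxOn hne hg.continuousOn
  have hamin' : ∀ x ∈ e, g a ≤ g x := fun x hx => hamin hx
  have hbmax' : ∀ x ∈ e, g x ≤ g b := fun x hx => hbmax hx
  have hab : a ≠ b := by
    rintro rfl
    have : e = {a} := by
      apply Subset.antisymm
      · intro x hx
        exact ginj x hx a ha (le_antisymm (hbmax' x hx) (hamin' x hx))
      · exact singleton_subset_iff.2 ha
    rw [this] at hdim
    rw [vectorSpan_singleton] at hdim
    simp at hdim
  refine ⟨a, b, hab, vertex_of_extreme ⟨hne, hcl, hcv, hext⟩ ⟨ha, ?_⟩,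
    vertex_of_extreme ⟨hne, hcl, hcv, hext⟩ ⟨hb, ?_⟩, ?_⟩
  · rintro x hx y hy ⟨p, q, hp, hq, hpq, h⟩
    apply ginj x hx a ha
    have h1 := hamin' x hx
    have h2 := hamin' y hy
    have h3 := gcomb p q x y
    rw [h] at h3
    obtain rfl : q = 1 - p := by linarith
    by_contra hne'
    have : g a < g x := lt_of_le_of_ne h1 (Ne.symm hne')
    nlinarith
  · rintro x hx y hy ⟨p, q, hp, hq, hpq, h⟩
    apply ginj x hx b hb
    have h1 := hbmax' x hx
    have h2 := hbmax' y hy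
    have h3 := gcomb p q x y
    rw [h] at h3
    obtain rfl : q = 1 - p := by linarith
    by_contra hne'
    have : g x < g b := lt_of_le_of_ne h1 hne'
    nlinarith
  · apply Subset.antisymm
    · intro x hx
      obtain ⟨s, hs⟩ := hline a ha b hb
      obtain ⟨t, ht⟩ := hline a ha x hx
      have hs1 := hgl a s
      rw [← hs] at hs1
      have ht1 := hgl a t
      rw [← ht] at ht1
      have h1 := hamin' x hx
      have h2 := hbmax' x hx
      have hs0 : s ≠ 0 := by
        rintro rfl
        simp at hs
        exact hab hs.symm
      have ht0 : 0 ≤ t := by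
        by_contra hc
        push Not at hc
        nlinarith
      have hts : t ≤ s := by
        by_contra hc
        push Not at hc
        nlinarith
      have hs0' : 0 < s := lt_of_le_of_ne (ht0.trans hts) (Ne.symm hs0)
      refine ⟨1 - t/s, t/s, ?_, by positivity, by ring, ?_⟩
      · rw [sub_nonneg, div_le_one hs0']; exact hts
      · rw [ht, hs]
        match_scalars <;> field_simp
        ring
    · exact hcv.segment_subset ha hb

lemma vertex_mem_seg {P : Set E3} {w a b : E3} (hw : IsVertexOf w P) (h : segment ℝ a b ⊆ P)
    (hm : w ∈ segment ℝ a b) : w = a ∨ w = b := by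
  by_contra hcon
  push Not at hcon
  have ho : w ∈ openSegment ℝ a b := mem_openSegment_of_ne_left_right (𝕜 := ℝ)
    (Ne.symm hcon.1) (Ne.symm hcon.2) hm
  have := hw.2.2.2.left_mem_of_mem_openSegment (h (left_mem_segment _ _ _))
    (h (right_mem_segment _ _ _)) rfl ho
  exact hcon.1 this.symm

/-- An extreme set containing an inner point of a segment contains the segment. -/
lemma seg_sub_of_open {P A : Set E3} (hA : IsFaceOf A P) {a b y : E3}
    (h : segment ℝ a b ⊆ P) (hy : y ∈ openSegment ℝ a b) (hyA : y ∈ A) : segment ℝ a b ⊆ A := by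
  have h1 := hA.2.2.2.left_mem_of_mem_openSegment (h (left_mem_segment _ _ _))
    (h (right_mem_segment _ _ _)) hyA hy
  have h2 := hA.2.2.2.right_mem_of_mem_openSegment (h (left_mem_segment _ _ _))
    (h (right_mem_segment _ _ _)) hyA hy
  exact hA.2.2.1.segment_subset h1 h2

/-- An edge at the vertex `w` is the intersection of two of the three facets at `w`. -/
lemma Trip.edge_cases {P F G H e : Set E3} {w : E3} (h : Trip P w F G H) (D : HDat P)
    (hP : IsPolytope P) (he : IsEdgeOf e P) (hw : w ∈ e) :
    e = F ∩ G ∨ e = F ∩ H ∨ e = G ∩ H := by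
  obtain ⟨a, b, hab, ha, hb, rfl⟩ := edge_seg hP he
  have hsP : segment ℝ a b ⊆ P := he.1.2.2.2.subset
  obtain ⟨y, hy⟩ : (openSegment ℝ a b).Nonempty :=
    ⟨_, midpoint_mem_openSegment (𝕜 := ℝ) a b⟩
  have hyS : y ∈ segment ℝ a b := openSegment_subset_segment _ _ _ hy
  have hyK : ∀ K, IsFacetOf K P → y ∈ K → segment ℝ a b ⊆ K :=
    fun K hK hyK => seg_sub_of_open hK.1 hsP hy hyK
  have two : ∀ A B C, Trip P w A B C → ¬ (y ∉ B ∧ y ∉ C) := by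
    rintro A B C hT ⟨hB, hC⟩
    have hdir : ∀ d, D.f A d = 0 → ∃ t : ℝ, d = t • (b - a) := by
      intro d hd
      obtain ⟨t, ht, hm⟩ := wiggle2 D hP he.1.2.2.2 (y := y) (d := d) hyS (fun K hK hyK' => by
        rcases hT.all K hK (hyK K hK hyK' hw) with rfl | rfl | rfl
        · exact hd
        · exact absurd hyK' hB
        · exact absurd hyK' hC)
      rw [segment_eq_image'] at hm hyS
      obtain ⟨r, -, hr⟩ := hm
      obtain ⟨s, -, hs⟩ := hyS
      refine ⟨t⁻¹ * (r - s), ?_⟩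
      have : t • d = (r - s) • (b - a) := by
        have h1 : t • d = (y + t • d) - y := by abel
        rw [h1, ← hr, ← hs]
        module
      rw [mul_smul, ← this, smul_smul, inv_mul_cancel₀ ht.ne', one_smul]
    obtain ⟨d1, p1, p2, p3⟩ := hT.solve D hP 0 1 0
    obtain ⟨d2, q1, q2, q3⟩ := hT.solve D hP 0 0 1
    obtain ⟨t, rfl⟩ := hdir d1 p1
    obtain ⟨s, rfl⟩ := hdir d2 q1
    rw [map_smul, smul_eq_mul] at p2 p3 q2 q3
    have ht : t ≠ 0 := by rintro rfl; simp at p2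
    have : D.f C (b - a) = 0 := (mul_eq_zero.1 p3).resolve_left ht
    rw [this] at q3
    simp at q3
  have h1 := two F G H h
  have h2 := two G H F h.rot
  have h3 := two H F G h.rot.rot
  have fin : ∀ A B C, Trip P w A B C → y ∈ A → y ∈ B → segment ℝ a b = A ∩ B := by
    intro A B C hT hA hB
    have hE := hT.edge D hP
    exact face_eq_of_subset_of_dim he.1 hE.1 (subset_inter (hyK A hT.fF hA) (hyK B hT.fG hB))
      (he.2.trans hE.2.symm)
  by_cases hF : y ∈ F <;> by_cases hG : y ∈ G <;> by_cases hH : y ∈ H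
  · exact Or.inl (fin F G H h hF hG)
  · exact Or.inl (fin F G H h hF hG)
  · exact Or.inr (Or.inl (fin F H G h.swap hF hH))
  · exact absurd ⟨hG, hH⟩ h1
  · exact Or.inr (Or.inr (fin G H F h.rot hG hH))
  · exact absurd ⟨hH, hF⟩ h2
  · exact absurd ⟨hF, hG⟩ h3
  · exact absurd ⟨hF, hG⟩ h3

/-- Every edge lies on exactly two facets. -/
lemma edge_facets {P e : Set E3} (hP : IsSimplePolytope3 P) (D : HDat P) (he : IsEdgeOf e P) :
    ∃ F G, F ≠ G ∧ IsFacetOf F P ∧ IsFacetOf G P ∧ e = F ∩ G ∧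
      ∀ K, IsFacetOf K P → e ⊆ K → K = F ∨ K = G := by
  obtain ⟨w, hw, hv⟩ := exists_vertex hP.1 he.1
  obtain ⟨A, B, C, h⟩ := trip_of_vertex hP hv
  have main : ∀ A B C, Trip P w A B C → e = A ∩ B → ∃ F G, F ≠ G ∧ IsFacetOf F P ∧
      IsFacetOf G P ∧ e = F ∩ G ∧ ∀ K, IsFacetOf K P → e ⊆ K → K = F ∨ K = G := by
    intro A B C h heq
    refine ⟨A, B, h.FG, h.fF, h.fG, heq, ?_⟩
    intro K hK heK
    rcases h.all K hK (heK hw) with rfl | rfl | rfl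
    · exact Or.inl rfl
    · exact Or.inr rfl
    · exfalso
      have : e ⊆ {w} := by
        intro x hx
        have hx' := hx
        rw [heq] at hx'
        exact h.inter_eq D hP.1 hx'.1 hx'.2 (heK hx)
      have h0 := setDim_mono this
      rw [he.2] at h0
      unfold setDim at h0
      rw [vectorSpan_singleton] at h0
      simp at h0
  rcases h.edge_cases D hP.1 he hw with h1 | h1 | h1
  · exact main _ _ _ h h1
  · exact main _ _ _ h.swap h1
  · exact main _ _ _ h.rot h1

lemma edge_other_facet {P e F : Set E3} (hP : IsSimplePolytope3 P) (D : HDat P)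
    (he : IsEdgeOf e P) (hF : IsFacetOf F P) (heF : e ⊆ F) :
    ∃ G, IsFacetOf G P ∧ G ≠ F ∧ e = F ∩ G := by
  obtain ⟨A, B, h1, h2, h3, h4, h5⟩ := edge_facets hP D he
  rcases h5 F hF heF with rfl | rfl
  · exact ⟨B, h3, h1.symm, h4⟩
  · exact ⟨A, h2, h1, by rw [h4, inter_comm]⟩

/-- An edge at `w` is a segment starting at `w`. -/
lemma edge_seg_at {P e : Set E3} (hP : IsPolytope P) (he : IsEdgeOf e P) {w : E3}
    (hw : IsVertexOf w P) (hwe : w ∈ e) :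
    ∃ b, w ≠ b ∧ IsVertexOf b P ∧ e = segment ℝ w b := by
  obtain ⟨a, b, hab, ha, hb, rfl⟩ := edge_seg hP he
  rcases vertex_mem_seg hw he.1.2.2.2.subset hwe with rfl | rfl
  · exact ⟨b, hab, hb, rfl⟩
  · exact ⟨a, hab.symm, ha, segment_symm _ _ _⟩

/-! ### A finite connected 2-regular relation is a cycle -/

lemma cycle_exists {α : Type*} (X : Set α) (hX : X.Finite) (r : α → α → Prop)
    (hsymm : ∀ x y, r x y → r y x) (hirr : ∀ x, ¬ r x x) (hmem : ∀ x y, r x y → x ∈ X)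
    (htwo : ∀ x ∈ X, ∃ b b', b ≠ b' ∧ ∀ y, r x y ↔ y = b ∨ y = b')
    (hconn : ∀ S ⊆ X, S.Nonempty → (∀ x ∈ S, ∀ y, r x y → y ∈ S) → X ⊆ S)
    (x0 x1 : α) (h01 : r x0 x1) :
    ∃ (s : ℕ) (x : ℕ → α), 3 ≤ s ∧ x 0 = x0 ∧ x 1 = x1 ∧
      (∀ i j, i < s → j < s → x i = x j → i = j) ∧ x s = x 0 ∧ (∀ i, r (x i) (x (i + 1))) ∧
      (∀ y ∈ X, ∃ i < s, y = x i) ∧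
      (∀ i < s, ∀ z, r (x i) z → z = x (i + 1) ∨ (0 < i ∧ z = x (i - 1)) ∨
        (i = 0 ∧ z = x (s - 1))) := by
  classical
  have hoth : ∀ p q, ∃ z, r p q → (r q z ∧ z ≠ p ∧ ∀ y, r q y → y = p ∨ y = z) := by
    intro p q
    by_cases h : r p q
    · obtain ⟨b, b', hb, hy⟩ := htwo q (hmem _ _ (hsymm _ _ h))
      have hp := (hy p).1 (hsymm _ _ h)
      rcases hp with rfl | rfl
      · exact ⟨b', fun _ => ⟨(hy b').2 (Or.inr rfl), hb.symm, fun y h => (hy y).1 h⟩⟩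
      · exact ⟨b, fun _ => ⟨(hy b).2 (Or.inl rfl), hb, fun y h => ((hy y).1 h).symm⟩⟩
    · exact ⟨p, fun h' => absurd h' h⟩
  choose oth hoth using hoth
  let st : ℕ → α × α := fun n => (fun q : α × α => (q.2, oth q.1 q.2))^[n] (x0, x1)
  have hst : ∀ n, st (n + 1) = ((st n).2, oth (st n).1 (st n).2) := by
    intro n
    simp only [st, Function.iterate_succ_apply']
  let x : ℕ → α := fun n => (st n).1
  have hx1 : ∀ n, x (n + 1) = (st n).2 := by
    intro n; simp only [x, hst]
  have hx2 : ∀ n, x (n + 2) = oth (x n) (x (n + 1)) := by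
    intro n
    rw [hx1 n]
    simp only [x, hst]
  have hr : ∀ n, r (x n) (x (n + 1)) := by
    intro n
    induction n with
    | zero => exact h01
    | succ n ih =>
      rw [show n + 1 + 1 = n + 2 from rfl, hx2 n]
      exact (hoth _ _ ih).1
  have hne : ∀ n, x (n + 2) ≠ x n := by
    intro n; rw [hx2 n]; exact (hoth _ _ (hr n)).2.1
  have hnb : ∀ n y, r (x (n + 1)) y → y = x n ∨ y = x (n + 2) := by
    intro n y h; rw [hx2 n]; exact (hoth _ _ (hr n)).2.2 y h
  have hxX : ∀ n, x n ∈ X := fun n => hmem _ _ (hr n)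
  have hrep : ∃ N, ∃ j < N, x N = x j := by
    by_contra hcon
    push Not at hcon
    have hinj : Function.Injective x := by
      intro i j hij
      rcases lt_trichotomy i j with h | h | h
      · exact absurd hij.symm (hcon j i h)
      · exact h
      · exact absurd hij (hcon i j h)
    have : (range x).Finite := hX.subset (by rintro _ ⟨n, rfl⟩; exact hxX n)
    exact Set.infinite_range_of_injective hinj this
  obtain ⟨j, hjN, hj⟩ := Nat.find_spec hrep
  set N := Nat.find hrep with hN
  have hmin : ∀ i k, i < N → k < N → x i = x k → i = k := by
    intro i k hi hk hik
    rcases lt_trichotomy i k with h | h | h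
    · exact absurd ⟨i, h, hik.symm⟩ (Nat.find_min hrep hk)
    · exact h
    · exact absurd ⟨k, h, hik⟩ (Nat.find_min hrep hi)
  have hj0 : j = 0 := by
    by_contra h0
    obtain ⟨i, rfl⟩ : ∃ i, j = i + 1 := ⟨j - 1, by omega⟩
    obtain ⟨M, hM⟩ : ∃ M, N = M + 1 := ⟨N - 1, by omega⟩
    have h1 : r (x (i + 1)) (x M) := by
      rw [← hj, hM]; exact hsymm _ _ (hr M)
    rcases hnb i _ h1 with h2 | h2
    · have := hmin M i (by omega) (by omega) h2
      omega
    · by_cases h3 : i + 2 < N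
      · have := hmin M (i + 2) (by omega) h3 h2
        subst this
        rw [hM] at hj
        exact hne (i + 1) hj
      · have : N = i + 2 := by omega
        rw [this] at hj
        have h4 := hr (i + 1)
        rw [show i + 1 + 1 = i + 2 from rfl, hj] at h4
        exact hirr _ h4
  subst hj0
  have hN3 : 3 ≤ N := by
    by_contra hlt
    have : N = 1 ∨ N = 2 := by omega
    rcases this with h | h
    · rw [h] at hj
      have := hr 0
      rw [zero_add, hj] at this
      exact hirr _ this
    · rw [h] at hj
      exact hne 0 hj
  have hnbr : ∀ i < N, ∀ z, r (x i) z → z = x (i + 1) ∨ (0 < i ∧ z = x (i - 1)) ∨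
        (i = 0 ∧ z = x (N - 1)) := by
    intro i hi z hz
    rcases Nat.eq_zero_or_pos i with rfl | hpos
    · have h1 : r (x 0) (x (N - 1)) := by
        have := hr (N - 1)
        rw [show N - 1 + 1 = N by omega, hj] at this
        exact hsymm _ _ this
      have h2 : x 1 ≠ x (N - 1) := by
        intro h
        have := hmin 1 (N - 1) (by omega) (by omega) h
        omega
      obtain ⟨b, b', hb, hy⟩ := htwo (x 0) (hxX 0)
      have e1 := (hy _).1 h1
      have e2 := (hy _).1 (hr 0)
      have e3 := (hy _).1 hz
      simp only [zero_add] at e2 ⊢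
      rcases e1 with e1 | e1 <;> rcases e2 with e2 | e2
      · exact absurd (e2.trans e1.symm) h2
      · rw [e1, e2]
        rcases e3 with e3 | e3
        · exact Or.inr (Or.inr ⟨trivial, e3⟩)
        · exact Or.inl e3
      · rw [e1, e2]
        rcases e3 with e3 | e3
        · exact Or.inl e3
        · exact Or.inr (Or.inr ⟨trivial, e3⟩)
      · exact absurd (e2.trans e1.symm) h2
    · obtain ⟨k, rfl⟩ : ∃ k, i = k + 1 := ⟨i - 1, by omega⟩
      rcases hnb k z hz with h | h
      · right; left; exact ⟨hpos, by simpa using h⟩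
      · left; exact h
  refine ⟨N, x, hN3, rfl, rfl, hmin, hj, hr, ?_, hnbr⟩
  have hS := hconn {y | ∃ i < N, y = x i} (by rintro _ ⟨i, -, rfl⟩; exact hxX i)
    ⟨x 0, 0, by omega, rfl⟩ (by
      rintro _ ⟨i, hi, rfl⟩ z hz
      rcases hnbr i hi z hz with h | ⟨h, h'⟩ | ⟨h, h'⟩
      · by_cases hlt : i + 1 < N
        · exact ⟨i + 1, hlt, h⟩
        · have : i + 1 = N := by omega
          rw [this, hj] at h
          exact ⟨0, by omega, h⟩
      · exact ⟨i - 1, by omega, h'⟩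
      · exact ⟨N - 1, by omega, h'⟩)
  exact fun y hy => hS hy

/-! ### Facets are polygons -/

/-- Adjacency of vertices along an edge of the facet `F`. -/
def FAdj (P F : Set E3) (a b : E3) : Prop :=
  a ≠ b ∧ IsVertexOf a P ∧ IsVertexOf b P ∧ IsEdgeOf (segment ℝ a b) P ∧ segment ℝ a b ⊆ F

lemma FAdj.symm {P F : Set E3} {a b : E3} (h : FAdj P F a b) : FAdj P F b a := by
  obtain ⟨h1, h2, h3, h4, h5⟩ := h
  rw [segment_symm] at h4 h5
  exact ⟨h1.symm, h3, h2, h4, h5⟩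

lemma seg_right_unique {P : Set E3} {a b c : E3} (hb : IsVertexOf b P)
    (hab : a ≠ b) (hs : segment ℝ a c ⊆ P) (h : segment ℝ a b = segment ℝ a c) : b = c := by
  have : b ∈ segment ℝ a c := h ▸ right_mem_segment ℝ a b
  rcases vertex_mem_seg hb hs this with h | h
  · exact absurd h.symm hab
  · exact h

lemma Trip.nbrs {P F G H : Set E3} {w : E3} (h : Trip P w F G H) (D : HDat P)
    (hP : IsPolytope P) : ∃ b b', b ≠ b' ∧ F ∩ G = segment ℝ w b ∧ F ∩ H = segment ℝ w b' ∧
      w ≠ b ∧ w ≠ b' ∧ ∀ y, FAdj P F w y ↔ y = b ∨ y = b' := by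
  have hE := h.edge D hP
  have hE' := h.swap.edge D hP
  obtain ⟨b, hwb, hb, e1⟩ := edge_seg_at hP hE h.vert ⟨h.mF, h.mG⟩
  obtain ⟨b', hwb', hb', e2⟩ := edge_seg_at hP hE' h.vert ⟨h.mF, h.mH⟩
  have hbm : b ∈ F ∩ G := e1 ▸ right_mem_segment ℝ w b
  have hbm' : b' ∈ F ∩ H := e2 ▸ right_mem_segment ℝ w b'
  refine ⟨b, b', ?_, e1, e2, hwb, hwb', ?_⟩
  · rintro rfl
    exact hwb (h.inter_eq D hP hbm.1 hbm.2 hbm'.2).symm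
  · intro y
    constructor
    · rintro ⟨n1, -, hy, hye, hyF⟩
      have hyy := right_mem_segment ℝ w y
      rcases h.edge_cases D hP hye (left_mem_segment ℝ w y) with h1 | h1 | h1
      · left
        rw [e1] at h1
        exact seg_right_unique hy n1 (by rw [← e1]; exact hE.1.2.2.2.subset) h1
      · right
        rw [e2] at h1
        exact seg_right_unique hy n1 (by rw [← e2]; exact hE'.1.2.2.2.subset) h1
      · exfalso
        have h2 := hyF hyy
        rw [h1] at hyy
        exact n1 (h.inter_eq D hP h2 hyy.1 hyy.2).symm
    · rintro (rfl | rfl)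
      · exact ⟨hwb, h.vert, hb, e1 ▸ hE, e1 ▸ inter_subset_left⟩
      · exact ⟨hwb', h.vert, hb', e2 ▸ hE', e2 ▸ inter_subset_left⟩

lemma vertices_finite {P : Set E3} (hP : IsPolytope P) : {w | IsVertexOf w P}.Finite := by
  refine Set.Finite.of_finite_image ((faces_finite hP).subset ?_)
    (Set.singleton_injective.injOn (s := {w | IsVertexOf w P}))
  rintro _ ⟨w, hw, rfl⟩
  exact hw

lemma facet_lt {P F : Set E3} (D : HDat P) (hF : IsFacetOf F P) {x y : E3} (hx : x ∈ P)
    (hxF : x ∉ F) (hy : y ∈ F) : D.f F (x - y) < 0 := by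
  have h1 : D.f F x < D.c F := lt_of_le_of_ne (D.le F hF x hx)
    (fun h => hxF ((D.mem F hF x).2 ⟨hx, h⟩))
  have h2 := ((D.mem F hF y).1 hy).2
  rw [map_sub]; linarith

lemma facet_le {P F : Set E3} (D : HDat P) (hF : IsFacetOf F P) {x y : E3} (hx : x ∈ P)
    (hy : y ∈ F) : D.f F (x - y) ≤ 0 := by
  have h1 := D.le F hF x hx
  have h2 := ((D.mem F hF y).1 hy).2
  rw [map_sub]; linarith

lemma facet_conn {P F : Set E3} (hP : IsSimplePolytope3 P) (D : HDat P) (hF : IsFacetOf F P)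
    (S : Set E3) (hS : S ⊆ {w | IsVertexOf w P ∧ w ∈ F}) (hne : S.Nonempty)
    (hcl : ∀ x ∈ S, ∀ y, FAdj P F x y → y ∈ S) : {w | IsVertexOf w P ∧ w ∈ F} ⊆ S := by
  rintro m ⟨hm, hmF⟩
  obtain ⟨A, B, hT⟩ := trip_of_one hP hm hF hmF
  have hSfin : S.Finite := (vertices_finite hP.1).subset (fun w hw => (hS hw).1)
  obtain ⟨w, hwS, hwmax⟩ := Set.exists_max_image S (fun x => D.f A x + D.f B x) hSfin hne
  by_cases hwm : w = m
  · rwa [← hwm]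
  exfalso
  obtain ⟨hw, hwF⟩ := hS hwS
  have hwP : w ∈ P := hw.2.2.2.subset rfl
  have hmP : m ∈ P := hm.2.2.2.subset rfl
  have hgt : 0 < D.f A (m - w) + D.f B (m - w) := by
    have e1 := facet_le D hT.fG hwP hT.mG
    have e2 := facet_le D hT.fH hwP hT.mH
    rw [← neg_sub w m, map_neg, map_neg]
    by_contra hcon
    have e3 : D.f A (w - m) = 0 := by linarith
    have e4 : D.f B (w - m) = 0 := by linarith
    exact hwm (sub_eq_zero.1 (hT.inj D hP.1 (facet_mem_sub D hF hwF hmF) e3 e4))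
  obtain ⟨A', B', hT'⟩ := trip_of_one hP hw hF hwF
  obtain ⟨b, b', hbb, e1, e2, hwb, hwb', hadj⟩ := hT'.nbrs D hP.1
  have hb := (hadj b).2 (Or.inl rfl)
  have hb' := (hadj b').2 (Or.inr rfl)
  have hbP : b ∈ P := hb.2.2.1.2.2.2.subset rfl
  have hbP' : b' ∈ P := hb'.2.2.1.2.2.2.subset rfl
  have hbm : b ∈ F ∩ A' := e1 ▸ right_mem_segment ℝ w b
  have hbm' : b' ∈ F ∩ B' := e2 ▸ right_mem_segment ℝ w b'
  have l1 : D.f B' (b - w) < 0 := facet_lt D hT'.fH hbP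
    (fun h => hwb (hT'.inter_eq D hP.1 hbm.1 hbm.2 h).symm) hT'.mH
  have l2 : D.f A' (b' - w) < 0 := facet_lt D hT'.fG hbP'
    (fun h => hwb' (hT'.inter_eq D hP.1 hbm'.1 h hbm'.2).symm) hT'.mG
  have l3 := facet_le D hT'.fH hmP hT'.mH
  have l4 := facet_le D hT'.fG hmP hT'.mG
  set p := D.f B' (m - w) / D.f B' (b - w) with hp
  set q := D.f A' (m - w) / D.f A' (b' - w) with hq
  have hp0 : 0 ≤ p := div_nonneg_of_nonpos l3 l1.le
  have hq0 : 0 ≤ q := div_nonneg_of_nonpos l4 l2.le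
  have hcomb : m - w = p • (b - w) + q • (b' - w) := by
    rw [← sub_eq_zero]
    refine hT'.inj D hP.1 ?_ ?_ ?_
    · rw [map_sub, map_add, map_smul, map_smul, facet_mem_sub D hF hmF hwF,
        facet_mem_sub D hF hbm.1 hwF, facet_mem_sub D hF hbm'.1 hwF]
      simp
    · rw [map_sub, map_add, map_smul, map_smul, facet_mem_sub D hT'.fG hbm.2 hT'.mG, hq, smul_eq_mul, smul_eq_mul,
        div_mul_cancel₀ _ l2.ne]
      ring
    · rw [map_sub, map_add, map_smul, map_smul, facet_mem_sub D hT'.fH hbm'.2 hT'.mH, hp, smul_eq_mul, smul_eq_mul,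
        div_mul_cancel₀ _ l1.ne]
      ring
  have m1 := hwmax b (hcl w hwS b hb)
  have m2 := hwmax b' (hcl w hwS b' hb')
  rw [hcomb, map_add, map_add, map_smul, map_smul, map_smul, map_smul] at hgt
  simp only [map_sub, smul_eq_mul] at hgt
  have n1 : D.f A b - D.f A w + (D.f B b - D.f B w) ≤ 0 := by linarith
  have n2 : D.f A b' - D.f A w + (D.f B b' - D.f B w) ≤ 0 := by linarith
  nlinarith [mul_nonneg hp0 (neg_nonneg.2 n1), mul_nonneg hq0 (neg_nonneg.2 n2)]

/-- The cyclic order of the vertices of a facet, starting at the vertex `v`. -/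
structure Pgon (P F : Set E3) (s : ℕ) (x : ℕ → E3) : Prop where
  three : 3 ≤ s
  inj : ∀ i j, i < s → j < s → x i = x j → i = j
  per : x s = x 0
  adj : ∀ i, FAdj P F (x i) (x (i + 1))
  surj : ∀ e, IsEdgeOf e P → e ⊆ F → ∃ i < s, e = segment ℝ (x i) (x (i + 1))
  card : facetEdges P F = s

lemma exists_poly {P F G H : Set E3} {v : E3} (hP : IsSimplePolytope3 P) (D : HDat P)
    (h : Trip P v F G H) : ∃ s x, Pgon P F s x ∧ x 0 = v ∧ F ∩ G = segment ℝ v (x 1) ∧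
      F ∩ H = segment ℝ v (x (s - 1)) := by
  obtain ⟨b, b', hbb, e1, e2, hwb, hwb', hadj⟩ := h.nbrs D hP.1
  obtain ⟨s, x, h3, hx0, hx1, hinj, hper, hr, hsurj, hnb⟩ :=
    cycle_exists {w | IsVertexOf w P ∧ w ∈ F}
    ((vertices_finite hP.1).subset (fun w hw => hw.1)) (FAdj P F) (fun _ _ h => h.symm)
    (fun x h => h.1 rfl) (fun a b h => ⟨h.2.1, h.2.2.2.2 (left_mem_segment _ _ _)⟩)
    (fun w hw => by
      obtain ⟨A, B, hT⟩ := trip_of_one hP hw.1 h.fF hw.2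
      obtain ⟨b, b', h1, -, -, -, -, h2⟩ := hT.nbrs D hP.1
      exact ⟨b, b', h1, h2⟩)
    (fun S hS hne hcl => facet_conn hP D h.fF S hS hne hcl) v b ((hadj b).2 (Or.inl rfl))
  have hE : ∀ e, IsEdgeOf e P → e ⊆ F → ∃ i < s, e = segment ℝ (x i) (x (i + 1)) := by
    intro e he heF
    obtain ⟨a, c, hac, ha, hc, rfl⟩ := edge_seg hP.1 he
    obtain ⟨i, hi, rfl⟩ := hsurj a ⟨ha, heF (left_mem_segment _ _ _)⟩
    rcases hnb i hi c ⟨hac, ha, hc, he, heF⟩ with h1 | ⟨h0, h1⟩ | ⟨h0, h1⟩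
    · exact ⟨i, hi, by rw [h1]⟩
    · refine ⟨i - 1, by omega, ?_⟩
      rw [h1, show i - 1 + 1 = i by omega, segment_symm]
    · refine ⟨s - 1, by omega, ?_⟩
      rw [h1, show s - 1 + 1 = s by omega, hper, h0, segment_symm]
  have hsP : ∀ i, segment ℝ (x i) (x (i + 1)) ⊆ P := fun i => (hr i).2.2.2.1.1.2.2.2.subset
  have hsinj : ∀ i j, i < s → j < s → i < j →
      segment ℝ (x i) (x (i + 1)) ≠ segment ℝ (x j) (x (j + 1)) := by
    intro i j hi hj hij heq
    have m1 : x i ∈ segment ℝ (x j) (x (j + 1)) := heq ▸ left_mem_segment _ _ _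
    have m2 : x (i + 1) ∈ segment ℝ (x j) (x (j + 1)) := heq ▸ right_mem_segment _ _ _
    have c1 := vertex_mem_seg (hr i).2.1 (hsP j) m1
    have c2 := vertex_mem_seg (hr i).2.2.1 (hsP j) m2
    by_cases hjs : j + 1 < s
    · rcases c1 with c1 | c1
      · have := hinj i j hi hj c1
        omega
      · have := hinj i (j + 1) hi hjs c1
        omega
    · have hjs' : j + 1 = s := by omega
      rw [hjs', hper] at c1 c2
      have hi0 : i = 0 := by
        rcases c1 with c1 | c1
        · have := hinj i j hi hj c1
          omega
        · exact hinj i 0 hi (by omega) c1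
      subst hi0
      rcases c2 with c2 | c2
      · have := hinj 1 j (by omega) hj c2
        omega
      · have := hinj 1 0 (by omega) (by omega) c2
        omega
  have hcard : facetEdges P F = s := by
    have himg : {e | IsEdgeOf e P ∧ e ⊆ F} =
        (fun i => segment ℝ (x i) (x (i + 1))) '' (Finset.range s : Set ℕ) := by
      ext e
      constructor
      · rintro ⟨he, heF⟩
        obtain ⟨i, hi, rfl⟩ := hE e he heF
        exact ⟨i, by simpa using hi, rfl⟩
      · rintro ⟨i, hi, rfl⟩
        exact ⟨(hr i).2.2.2.1, (hr i).2.2.2.2⟩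
    unfold facetEdges
    rw [himg, Set.InjOn.ncard_image, Set.ncard_coe_finset, Finset.card_range]
    intro i hi j hj hij
    simp only [Finset.coe_range, mem_Iio] at hi hj
    rcases lt_trichotomy i j with hlt | heq | hlt
    · exact absurd hij (hsinj i j hi hj hlt)
    · exact heq
    · exact absurd hij.symm (hsinj j i hj hi hlt)
  refine ⟨s, x, ⟨h3, hinj, hper, hr, hE, hcard⟩, hx0, by rw [hx1, e1], ?_⟩
  have hl : FAdj P F v (x (s - 1)) := by
    have := hr (s - 1)
    rw [show s - 1 + 1 = s by omega, hper, hx0] at this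
    exact this.symm
  rcases (hadj _).1 hl with h1 | h1
  · exfalso
    rw [← hx1] at h1
    have := hinj (s - 1) 1 (by omega) (by omega) h1
    omega
  · rw [h1, e2]

/-! ### Cyclic bookkeeping -/

/-- Cyclic words made of three blocks, together with the two walks round it. -/
structure CycNum (m : Fin 3 → ℕ) (n k : ℕ) (φ : Fin n → Fin 3) (off : Fin n → ℕ)
    (ψ : Fin n → Fin k) (jj : Fin k → Fin n) : Prop where
  lt : ∀ j, off j < m (φ j)
  step : ∀ j, (φ (nxt j) = φ j ∧ off (nxt j) = off j + 1) ∨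
    (φ (nxt j) = φ j + 1 ∧ off j + 1 = m (φ j) ∧ off (nxt j) = 0)
  inj : ∀ j j', φ j = φ j' → off j = off j' → j = j'
  surj : ∀ i t, t < m i → ∃ j, φ j = i ∧ off j = t
  phi_step : ∀ j, φ (nxt j) = φ j ∨ φ (nxt j) = nxt (φ j)
  phi_surj : Function.Surjective φ
  phi_card : (Finset.univ.filter (fun i : Fin n => φ (nxt i) ≠ φ i)).card = 3
  psi_step : ∀ j, ψ (nxt j) = ψ j ∨ ψ (nxt j) = nxt (ψ j)
  psi_card : (Finset.univ.filter (fun i : Fin n => ψ (nxt i) ≠ ψ i)).card = k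
  psi_loop : ∀ q, ∃ a, ψ a = q ∧ ψ (nxt a) = nxt q ∧ φ (nxt a) = φ a
  back : ∀ j, jj (ψ j) = j ∨ (j = nxt (jj (ψ j)) ∧ φ j ≠ φ (jj (ψ j))) ∨
    (nxt j = jj (ψ j) ∧ φ (nxt j) ≠ φ j)

lemma nxt_val {n : ℕ} (j : Fin n) : (nxt j).1 = if j.1 + 1 = n then 0 else j.1 + 1 := by
  have := j.2
  simp only [nxt]
  split_ifs with h
  · rw [h, Nat.mod_self]
  · exact Nat.mod_eq_of_lt (by omega)

lemma exists_num (m : Fin 3 → ℕ) (hm : ∀ i, 2 ≤ m i) (n k : ℕ) (hn : n = m 0 + m 1 + m 2)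
    (hk : k = n - 3) : ∃ φ off ψ jj, CycNum m n k φ off ψ jj := by
  have h0 := hm 0
  have h1 := hm 1
  have h2 := hm 2
  obtain ⟨a, ha⟩ : ∃ a, a = m 0 := ⟨_, rfl⟩
  obtain ⟨b, hb⟩ : ∃ b, b = m 1 := ⟨_, rfl⟩
  obtain ⟨c, hc⟩ : ∃ c, c = m 2 := ⟨_, rfl⟩
  rw [← ha, ← hb, ← hc] at hn
  rw [← ha] at h0
  rw [← hb] at h1
  rw [← hc] at h2
  let φ : Fin n → Fin 3 := fun j => if j.1 < a then 0 else if j.1 < a + b then 1 else 2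
  let off : Fin n → ℕ := fun j => if j.1 < a then j.1 else if j.1 < a + b then j.1 - a
    else j.1 - a - b
  let ψ : Fin n → Fin k := fun j => ⟨if j.1 < a then j.1 else if j.1 < a + b then j.1 - 1
    else if j.1 + 1 = n then 0 else j.1 - 2, by have := j.2; split_ifs <;> omega⟩
  let jj : Fin k → Fin n := fun q => ⟨if q.1 < a then q.1 else if q.1 < a + b - 1 then q.1 + 1
    else q.1 + 2, by have := q.2; split_ifs <;> omega⟩
  have p0 : ∀ j : Fin n, j.1 < a → φ j = 0 ∧ off j = j.1 := fun j h => by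
    simp only [φ, off, if_pos h, and_self]
  have p1 : ∀ j : Fin n, ¬ j.1 < a → j.1 < a + b → φ j = 1 ∧ off j = j.1 - a := fun j h h' => by
    simp only [φ, off, if_neg h, if_pos h', and_self]
  have p2 : ∀ j : Fin n, ¬ j.1 < a + b → φ j = 2 ∧ off j = j.1 - a - b := fun j h' => by
    have h : ¬ j.1 < a := by omega
    simp only [φ, off, if_neg h, if_neg h', and_self]
  have key : ∀ j : Fin n, (j.1 < a ∧ φ j = 0 ∧ off j = j.1) ∨
      (a ≤ j.1 ∧ j.1 < a + b ∧ φ j = 1 ∧ off j = j.1 - a) ∨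
      (a + b ≤ j.1 ∧ φ j = 2 ∧ off j = j.1 - a - b) := by
    intro j
    by_cases h : j.1 < a
    · exact Or.inl ⟨h, p0 j h⟩
    · by_cases h' : j.1 < a + b
      · exact Or.inr (Or.inl ⟨by omega, h', p1 j h h'⟩)
      · exact Or.inr (Or.inr ⟨by omega, p2 j h'⟩)
  have kψ : ∀ j : Fin n, (ψ j).1 = if j.1 < a then j.1 else if j.1 < a + b then j.1 - 1
    else if j.1 + 1 = n then 0 else j.1 - 2 := fun j => rfl
  have kjj : ∀ q : Fin k, (jj q).1 = if q.1 < a then q.1 else if q.1 < a + b - 1 then q.1 + 1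
    else q.1 + 2 := fun q => rfl
  have d01 : (0 : Fin 3) ≠ 1 := by decide
  have d02 : (0 : Fin 3) ≠ 2 := by decide
  have d12 : (1 : Fin 3) ≠ 2 := by decide
  have same : ∀ j, φ (nxt j) = φ j ↔ (j.1 + 1 ≠ a ∧ j.1 + 1 ≠ a + b ∧ j.1 + 1 ≠ n) := by
    intro j
    have hj := j.2
    have hv := nxt_val j
    rcases key j with ⟨q1, q2, -⟩ | ⟨q1, q1', q2, -⟩ | ⟨q1, q2, -⟩ <;>
    rcases key (nxt j) with ⟨r1, r2, -⟩ | ⟨r1, r1', r2, -⟩ | ⟨r1, r2, -⟩ <;>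
    rw [q2, r2] <;> split_ifs at hv <;>
    simp only [d01, d02, d12, d01.symm, d02.symm, d12.symm, false_iff, true_iff] <;> omega
  have psame : ∀ j, ψ (nxt j) = ψ j ↔ ¬ (j.1 + 1 ≠ a ∧ j.1 + 1 ≠ a + b ∧ j.1 + 1 ≠ n) := by
    intro j
    have hj := j.2
    have hv := nxt_val j
    rw [Fin.ext_iff, kψ, kψ]
    split_ifs at hv ⊢ <;> omega
  refine ⟨φ, off, ψ, jj, ?_, ?_, ?_, ?_, ?_, ?_, ?_, ?_, ?_, ?_, ?_⟩
  · intro j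
    have hj := j.2
    rcases key j with ⟨q1, q2, q3⟩ | ⟨q1, q1', q2, q3⟩ | ⟨q1, q2, q3⟩ <;> rw [q2, q3] <;> omega
  · intro j
    have hj := j.2
    have hv := nxt_val j
    rcases key j with ⟨q1, q2, q3⟩ | ⟨q1, q1', q2, q3⟩ | ⟨q1, q2, q3⟩ <;>
    rcases key (nxt j) with ⟨r1, r2, r3⟩ | ⟨r1, r1', r2, r3⟩ | ⟨r1, r2, r3⟩ <;>
    rw [q2, r2, q3, r3] <;> split_ifs at hv <;>
    first
    | (exfalso; omega)
    | exact Or.inl ⟨rfl, by omega⟩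
    | exact Or.inr ⟨rfl, by omega, by omega⟩
  · intro j j' h h'
    rcases key j with ⟨q1, q2, q3⟩ | ⟨q1, q1', q2, q3⟩ | ⟨q1, q2, q3⟩ <;>
    rcases key j' with ⟨r1, r2, r3⟩ | ⟨r1, r1', r2, r3⟩ | ⟨r1, r2, r3⟩ <;>
    rw [q2, r2] at h <;> rw [q3, r3] at h' <;>
    first
    | (exact absurd h (by decide))
    | exact Fin.ext (by omega)
  · intro i t ht
    have hi : i = 0 ∨ i = 1 ∨ i = 2 := by fin_cases i <;> decide
    rcases hi with rfl | rfl | rfl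
    · exact ⟨⟨t, by omega⟩, p0 ⟨t, by omega⟩ (by simp only; omega)⟩
    · have := p1 ⟨a + t, by omega⟩ (by simp only; omega) (by simp only; omega)
      exact ⟨⟨a + t, by omega⟩, this.1, by rw [this.2]; simp only; omega⟩
    · have := p2 ⟨a + b + t, by omega⟩ (by simp only; omega)
      exact ⟨⟨a + b + t, by omega⟩, this.1, by rw [this.2]; simp only; omega⟩
  · intro j
    have hj := j.2
    have hv := nxt_val j
    rcases key j with ⟨q1, q2, q3⟩ | ⟨q1, q1', q2, q3⟩ | ⟨q1, q2, q3⟩ <;>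
    rcases key (nxt j) with ⟨r1, r2, r3⟩ | ⟨r1, r1', r2, r3⟩ | ⟨r1, r2, r3⟩ <;>
    rw [q2, r2] <;> split_ifs at hv <;>
    first
    | (exfalso; omega)
    | exact Or.inl rfl
    | exact Or.inr (by decide)
  · intro i
    have hi : i = 0 ∨ i = 1 ∨ i = 2 := by fin_cases i <;> decide
    rcases hi with rfl | rfl | rfl
    · exact ⟨⟨0, by omega⟩, (p0 ⟨0, by omega⟩ (by simp only; omega)).1⟩
    · exact ⟨⟨a, by omega⟩, (p1 ⟨a, by omega⟩ (by simp only; omega) (by simp only; omega)).1⟩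
    · exact ⟨⟨a + b, by omega⟩, (p2 ⟨a + b, by omega⟩ (by simp only; omega)).1⟩
  · rw [Finset.card_eq_three]
    refine ⟨⟨a - 1, by omega⟩, ⟨a + b - 1, by omega⟩, ⟨n - 1, by omega⟩, ?_, ?_, ?_, ?_⟩
    · rw [Ne, Fin.ext_iff]; simp only; omega
    · rw [Ne, Fin.ext_iff]; simp only; omega
    · rw [Ne, Fin.ext_iff]; simp only; omega
    · ext j
      have hj := j.2
      simp only [Finset.mem_filter, Finset.mem_univ, true_and, Finset.mem_insert,
        Finset.mem_singleton, Fin.ext_iff, ne_eq]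
      rw [← Fin.ext_iff, same]
      omega
  · intro j
    have hj := j.2
    have hv := nxt_val j
    have hq := nxt_val (ψ j)
    have hk1 := kψ j
    rw [Fin.ext_iff, Fin.ext_iff, hq, hk1, kψ]
    by_cases c1 : j.1 < a
    · simp only [if_pos c1]
      split_ifs at hv ⊢ <;> omega
    · by_cases c2 : j.1 < a + b
      · simp only [if_neg c1, if_pos c2]
        split_ifs at hv ⊢ <;> omega
      · simp only [if_neg c1, if_neg c2]
        split_ifs at hv ⊢ <;> omega
  · have hcompl : (Finset.univ.filter (fun i : Fin n => ψ (nxt i) ≠ ψ i)) =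
        Finset.univ \ {⟨a - 1, by omega⟩, ⟨a + b - 1, by omega⟩, ⟨n - 1, by omega⟩} := by
      ext j
      have hj := j.2
      simp only [Finset.mem_filter, Finset.mem_univ, true_and, Finset.mem_insert, Finset.mem_sdiff,
        Finset.mem_singleton, Fin.ext_iff, ne_eq]
      rw [← Fin.ext_iff, psame]
      omega
    have h3 : ({⟨a - 1, by omega⟩, ⟨a + b - 1, by omega⟩, ⟨n - 1, by omega⟩} :
        Finset (Fin n)).card = 3 := by
      rw [Finset.card_eq_three]
      refine ⟨_, _, _, ?_, ?_, ?_, rfl⟩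
      · rw [Ne, Fin.ext_iff]; simp only; omega
      · rw [Ne, Fin.ext_iff]; simp only; omega
      · rw [Ne, Fin.ext_iff]; simp only; omega
    rw [hcompl, Finset.card_sdiff_of_subset (Finset.subset_univ _), h3, Finset.card_univ,
      Fintype.card_fin, hk]
  · intro q
    have hq := q.2
    let w : Fin n := ⟨if q.1 + 1 < a then q.1 else if q.1 + 2 < a + b then q.1 + 1 else q.1 + 2,
      by split_ifs <;> omega⟩
    have hw : w.1 = if q.1 + 1 < a then q.1 else if q.1 + 2 < a + b then q.1 + 1 else q.1 + 2 := rfl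
    have hv := nxt_val w
    have hqv := nxt_val q
    refine ⟨w, ?_, ?_, ?_⟩
    · rw [Fin.ext_iff, kψ]
      split_ifs at hw ⊢ <;> omega
    · rw [Fin.ext_iff, kψ, hqv]
      split_ifs at hw <;> rw [if_neg (by omega)] at hv <;> split_ifs <;> omega
    · rw [same]
      split_ifs at hw <;> omega
  · intro j
    have hj := j.2
    have hv := nxt_val j
    have hv2 := nxt_val (jj (ψ j))
    have hk1 := kψ j
    have hk2 := kjj (ψ j)
    have s1 := same j
    have s2 := same (jj (ψ j))
    by_cases c1 : j.1 = a ∨ j.1 = a + b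
    · right; left
      have hz : (jj (ψ j)).1 + 1 = j.1 := by
        split_ifs at hk1 <;> split_ifs at hk2 <;> omega
      have e : j = nxt (jj (ψ j)) := by
        rw [Fin.ext_iff, hv2, if_neg (by omega)]; omega
      refine ⟨e, ?_⟩
      rw [← e] at s2
      rw [Ne, s2]; omega
    · by_cases c2 : j.1 + 1 = n
      · right; right
        refine ⟨?_, ?_⟩
        · rw [Fin.ext_iff, hv, if_pos c2]
          split_ifs at hk1 <;> split_ifs at hk2 <;> omega
        · rw [Ne, s1]; omega
      · left
        rw [Fin.ext_iff]
        split_ifs at hk1 <;> split_ifs at hk2 <;> omega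
/-! ### Topology of the boundary -/

/-- The part of the facet `F` lying in no other facet. -/
def UF (P F : Set E3) : Set E3 := {x | x ∈ F ∧ ∀ G, IsFacetOf G P → G ≠ F → x ∉ G}

lemma relint_sub_UF {P F : Set E3} (hF : IsFacetOf F P) : intrinsicInterior ℝ F ⊆ UF P F := by
  intro x hx
  refine ⟨intrinsicInterior_subset hx, fun G hG hne hxG => hne ?_⟩
  exact (face_eq_of_subset_of_dim hF.1 hG.1 (ext_relint hF.1.2.2.2.subset hG.1.2.2.2 hx hxG)
    (by rw [hF.2, hG.2])).symm

lemma UF_nonempty {P F : Set E3} (hF : IsFacetOf F P) : (UF P F).Nonempty :=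
  (hF.1.1.intrinsicInterior hF.1.2.2.1).mono (relint_sub_UF hF)

lemma UF_open {P F : Set E3} (hF : IsFacetOf F P) {x y : E3} (hx : x ∈ UF P F) (hy : y ∈ F) :
    openSegment ℝ x y ⊆ UF P F := by
  intro z hz
  refine ⟨hF.1.2.2.1.segment_subset hx.1 hy (openSegment_subset_segment _ _ _ hz), ?_⟩
  intro G hG hne hzG
  exact hx.2 G hG hne (hG.1.2.2.2.left_mem_of_mem_openSegment (hF.1.2.2.2.subset hx.1)
    (hF.1.2.2.2.subset hy) hzG hz)

lemma UF_convex {P F : Set E3} (hF : IsFacetOf F P) : Convex ℝ (UF P F) :=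
  convex_iff_openSegment_subset.2 (fun _ hx _ hy => UF_open hF hx hy.1)

lemma sub_closure_UF {P F : Set E3} (hF : IsFacetOf F P) : F ⊆ closure (UF P F) := by
  obtain ⟨x, hx⟩ := UF_nonempty hF
  intro y hy
  exact closure_mono (UF_open hF hx hy)
    (segment_subset_closure_openSegment (right_mem_segment ℝ x y))

lemma facet_frontier {P F : Set E3} (hP : IsSimplePolytope3 P) (hF : IsFacetOf F P) :
    F ⊆ frontier P := by
  intro x hx
  refine ⟨subset_closure (hF.1.2.2.2.subset hx), face_not_interior hF.1 ?_ hx⟩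
  rw [hF.2, hP.2.1]; norm_num

lemma frontier_facet {P : Set E3} (hP : IsSimplePolytope3 P) (D : HDat P) {x : E3}
    (hx : x ∈ frontier P) : ∃ F, IsFacetOf F P ∧ x ∈ F := by
  have hxP : x ∈ P := (poly_compact hP.1).isClosed.frontier_subset hx
  by_contra hcon
  push Not at hcon
  refine hx.2 (mem_interior_of_strict _ (facets_finite hP.1) D.f D.c D.hrep ?_)
  intro F hF
  exact lt_of_le_of_ne (D.le F hF x hxP) (fun h => hcon F hF ((D.mem F hF x).2 ⟨hxP, h⟩))

lemma comp_facet {P γ F : Set E3} (hP : IsSimplePolytope3 P)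
    (hγ : ∀ F, IsFacetOf F P → ∀ x ∈ UF P F, x ∉ γ) (hF : IsFacetOf F P) {y : E3} (hy : y ∈ F)
    (hyγ : y ∉ γ) : UF P F ⊆ connectedComponentIn (frontier P \ γ) y := by
  have hpre : IsPreconnected (insert y (UF P F)) := by
    refine (UF_convex hF).isPreconnected.subset_closure (subset_insert _ _) ?_
    exact insert_subset (sub_closure_UF hF hy) subset_closure
  refine (subset_insert _ _).trans (hpre.subset_connectedComponentIn (mem_insert _ _) ?_)
  refine insert_subset ⟨facet_frontier hP hF hy, hyγ⟩ ?_
  intro x hx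
  exact ⟨facet_frontier hP hF hx.1, hγ F hF x hx⟩

lemma comp_sep {X γ A B : Set E3} (hA : IsClosed A) (hB : IsClosed B) (hX : X ⊆ A ∪ B)
    (hAB : A ∩ B ⊆ γ) {v y : E3} (hv : v ∈ A) (hy : y ∈ B) (hvX : v ∈ X \ γ) (hyX : y ∈ X \ γ) :
    connectedComponentIn (X \ γ) v ≠ connectedComponentIn (X \ γ) y := by
  intro h
  have hpre : IsPreconnected (connectedComponentIn (X \ γ) v) := isPreconnected_connectedComponentIn
  have hsub := connectedComponentIn_subset (X \ γ) v
  obtain ⟨z, hz, hz'⟩ := isPreconnected_closed_iff.1 hpre A B hA hB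
    (fun z hz => hX (hsub hz).1) ⟨v, mem_connectedComponentIn hvX, hv⟩
    ⟨y, h ▸ mem_connectedComponentIn hyX, hy⟩
  exact (hsub hz).2 (hAB hz')

lemma edge_UF {P e F : Set E3} (hP : IsSimplePolytope3 P) (D : HDat P) (he : IsEdgeOf e P)
    (_hF : IsFacetOf F P) {x : E3} (hx : x ∈ UF P F) : x ∉ e := by
  intro hxe
  obtain ⟨A, B, hAB, hA, hB, rfl, -⟩ := edge_facets hP D he
  by_cases h : A = F
  · exact hx.2 B hB (fun h' => hAB (h.trans h'.symm)) hxe.2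
  · exact hx.2 A hA h hxe.1

/-! ### The bordering loop -/

lemma borders_of_cycle {P : Set E3} (hP : IsSimplePolytope3 P) (D : HDat P) {F : Fin 3 → Set E3}
    (hL : IsLoop P F) {v : E3} (hT : Trip P v (F 0) (F 1) (F 2)) {m : Fin 3 → ℕ} {n k : ℕ}
    (hn : 3 ≤ n) (hk : 3 ≤ k) {φ : Fin n → Fin 3} {off : Fin n → ℕ} {ψ : Fin n → Fin k}
    {jj : Fin k → Fin n} (N : CycNum m n k φ off ψ jj) (u : Fin n → E3)
    (hu : Function.Injective u) (hadj : ∀ j, FAdj P (F (φ j)) (u j) (u (nxt j)))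
    (hv : ∀ j, v ∉ segment ℝ (u j) (u (nxt j)))
    (hcov : ∀ i e, IsEdgeOf e P → e ⊆ F i → v ∉ e → ∃ j, e = segment ℝ (u j) (u (nxt j))) :
    ∃ L' : Fin k → Set E3, Borders P F L' := by
  have hFf := hL.2.1
  have hvF : ∀ i, v ∈ F i := by
    intro i
    have hi : i = 0 ∨ i = 1 ∨ i = 2 := by fin_cases i <;> decide
    rcases hi with rfl | rfl | rfl
    exacts [hT.mF, hT.mG, hT.mH]
  have hvall : ∀ K, IsFacetOf K P → v ∈ K → ∃ i, K = F i := by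
    intro K hK hvK
    rcases hT.all K hK hvK with h | h | h
    exacts [⟨_, h⟩, ⟨_, h⟩, ⟨_, h⟩]
  have hFinj : Function.Injective F := by
    intro i j hij
    have hi : i = 0 ∨ i = 1 ∨ i = 2 := by fin_cases i <;> decide
    have hj : j = 0 ∨ j = 1 ∨ j = 2 := by fin_cases j <;> decide
    have := hT.FG
    have := hT.FH
    have := hT.GH
    rcases hi with rfl | rfl | rfl <;> rcases hj with rfl | rfl | rfl <;>
      first
      | rfl
      | exact absurd hij (by assumption)
      | exact absurd hij.symm (by assumption)
  have hnn : ∀ j : Fin n, nxt (nxt j) ≠ j := by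
    intro j h
    have hj := j.2
    have h1 := nxt_val j
    have h2 := nxt_val (nxt j)
    rw [h] at h2
    split_ifs at h1 h2 <;> omega
  have hedge : ∀ j, IsEdgeOf (segment ℝ (u j) (u (nxt j))) P := fun j => (hadj j).2.2.2.1
  have hGex : ∀ j, ∃ G, IsFacetOf G P ∧ G ≠ F (φ j) ∧
      segment ℝ (u j) (u (nxt j)) = F (φ j) ∩ G := fun j =>
    edge_other_facet hP D (hedge j) (hFf _) (hadj j).2.2.2.2
  choose G hGf hGne hGeq using hGex
  have hGv : ∀ j, v ∉ G j := by
    intro j h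
    apply hv j
    rw [hGeq j]
    exact ⟨hvF _, h⟩
  have hGF : ∀ j i, F i ≠ G j := fun j i h => hGv j (h ▸ hvF i)
  have huG : ∀ j, u j ∈ G j := fun j => by
    have := left_mem_segment ℝ (u j) (u (nxt j))
    rw [hGeq j] at this
    exact this.2
  have huG' : ∀ j, u (nxt j) ∈ G j := fun j => by
    have := right_mem_segment ℝ (u j) (u (nxt j))
    rw [hGeq j] at this
    exact this.2
  have huF : ∀ j, u j ∈ F (φ j) := fun j => (hadj j).2.2.2.2 (left_mem_segment ℝ _ _)
  have huF' : ∀ j, u (nxt j) ∈ F (φ j) := fun j => (hadj j).2.2.2.2 (right_mem_segment ℝ _ _)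
  have huv : ∀ j, IsVertexOf (u j) P := fun j => (hadj j).2.1
  have hGsame : ∀ j, φ (nxt j) = φ j → IsEdgeOf (G j ∩ G (nxt j)) P := by
    intro j hφ
    refine inter_edge hP D (hGf _) (hGf _) ?_ ⟨u (nxt j), huG' j, huG _⟩
    intro hGG
    have e1 := hGeq j
    have e2 := hGeq (nxt j)
    rw [hφ, ← hGG, ← e1] at e2
    have hm : u (nxt (nxt j)) ∈ segment ℝ (u j) (u (nxt j)) := e2 ▸ right_mem_segment ℝ _ _
    rcases vertex_mem_seg (huv _) (hedge j).1.2.2.2.subset hm with h | h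
    · exact hnn j (hu h)
    · exact (hadj (nxt j)).1 h.symm
  have hGdiff : ∀ j, φ (nxt j) ≠ φ j → G (nxt j) = G j := by
    intro j hφ
    have hTT : Trip P (u (nxt j)) (F (φ j)) (F (φ (nxt j))) (G j) :=
      trip_mk hP (huv _) (hFf _) (hFf _) (hGf _) (huF' j) (huF _) (huG' j)
        (fun h => hφ (hFinj h).symm) (hGF _ _) (hGF _ _)
    rcases hTT.all _ (hGf (nxt j)) (huG _) with h | h | h
    · exact absurd h.symm (hGF _ _)
    · exact absurd h.symm (hGF _ _)
    · exact h
  have hL'eq : ∀ j, G (jj (ψ j)) = G j := by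
    intro j
    rcases N.back j with h | ⟨h, h'⟩ | ⟨h, h'⟩
    · rw [h]
    · have := hGdiff (jj (ψ j)) (by rw [← h]; exact h')
      rw [← h] at this
      exact this.symm
    · rw [← h]; exact hGdiff j h'
  have hL'loop : IsLoop P (fun q => G (jj q)) := by
    refine ⟨by omega, fun q => hGf _, fun _ q => ?_⟩
    obtain ⟨a, ha, ha', hφ⟩ := N.psi_loop q
    have := hGsame a hφ
    rw [← hL'eq a, ← hL'eq (nxt a), ha', ha] at this
    exact this
  have hψs : Function.Surjective ψ := fun q => by
    obtain ⟨a, ha, -⟩ := N.psi_loop q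
    exact ⟨a, ha⟩
  set γ : Set E3 := ⋃ j, segment ℝ (u j) (u (nxt j)) with hγdef
  have hvia : IsSimpleEdgeCycleVia P γ u := ⟨hn, hu, huv, hedge, rfl⟩
  have hγU : ∀ F, IsFacetOf F P → ∀ x ∈ UF P F, x ∉ γ := by
    intro K hK x hx hxγ
    obtain ⟨j, hj⟩ := mem_iUnion.1 hxγ
    exact edge_UF hP D (hedge j) hK hx hj
  have hvγ : v ∉ γ := by
    intro h
    obtain ⟨j, hj⟩ := mem_iUnion.1 h
    exact hv j hj
  have hj0 : 0 < n := by omega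
  obtain ⟨y, hy⟩ := UF_nonempty (hGf ⟨0, hj0⟩)
  have hyγ : y ∉ γ := hγU _ (hGf _) y hy
  -- all outer facets lie in the same component
  have houter : ∀ t (ht : t < n),
      UF P (G ⟨t, ht⟩) ⊆ connectedComponentIn (frontier P \ γ) y := by
    intro t
    induction t with
    | zero => intro ht; exact comp_facet hP hγU (hGf _) hy.1 hyγ
    | succ t ih =>
      intro ht
      have hprev := ih (by omega)
      have hnx : (⟨t + 1, ht⟩ : Fin n) = nxt ⟨t, by omega⟩ := by
        rw [Fin.ext_iff, nxt_val]; simp only; rw [if_neg (by omega)]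
      rw [hnx]
      set j : Fin n := ⟨t, by omega⟩ with hjdef
      by_cases hφ : φ (nxt j) = φ j
      · have hE := hGsame j hφ
        obtain ⟨a, b, hab, ha, hb, hseg⟩ := edge_seg hP.1 hE
        have hz := midpoint_mem_openSegment (𝕜 := ℝ) a b
        set z := midpoint ℝ a b
        have hzs : z ∈ G j ∩ G (nxt j) := by
          rw [hseg]; exact openSegment_subset_segment _ _ _ hz
        have hsP : segment ℝ a b ⊆ P := hseg ▸ hE.1.2.2.2.subset
        have hzγ : z ∉ γ := by
          intro h
          obtain ⟨i, hi⟩ := mem_iUnion.1 h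
          have hzF : z ∈ F (φ i) := (hadj i).2.2.2.2 hi
          have hsub := seg_sub_of_open (hFf (φ i)).1 hsP hz hzF
          obtain ⟨A, B, hAB, hA, hB, -, hall⟩ := edge_facets hP D hE
          have hGG : G j ≠ G (nxt j) := by
            intro h
            have := hE.2
            rw [← h, inter_self, (hGf j).2] at this
            omega
          rcases hall _ (hGf j) inter_subset_left with h1 | h1 <;>
          rcases hall _ (hGf (nxt j)) inter_subset_right with h2 | h2 <;>
          rcases hall _ (hFf (φ i)) (hseg ▸ hsub) with h3 | h3
          · exact hGG (h1.trans h2.symm)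
          · exact hGG (h1.trans h2.symm)
          · exact hGF _ _ (h3.trans h1.symm)
          · exact hGF _ _ (h3.trans h2.symm)
          · exact hGF _ _ (h3.trans h2.symm)
          · exact hGF _ _ (h3.trans h1.symm)
          · exact hGG (h1.trans h2.symm)
          · exact hGG (h1.trans h2.symm)
        have c1 := comp_facet hP hγU (hGf j) hzs.1 hzγ
        have c2 := comp_facet hP hγU (hGf (nxt j)) hzs.2 hzγ
        obtain ⟨p, hp⟩ := UF_nonempty (hGf j)
        have e1 := connectedComponentIn_eq (hprev hp)
        have e2 := connectedComponentIn_eq (c1 hp)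
        rw [e1, ← e2]
        exact c2
      · rw [hGdiff j hφ]; exact hprev
  have hsepar : connectedComponentIn (frontier P \ γ) v ≠
      connectedComponentIn (frontier P \ γ) y := by
    refine comp_sep (A := ⋃ i, F i) (B := ⋃ K ∈ {K | IsFacetOf K P ∧ ∀ i, K ≠ F i}, K)
      (isClosed_iUnion_of_finite (fun i => (hFf i).1.2.1)) ?_ ?_ ?_ (mem_iUnion.2 ⟨0, hvF 0⟩) ?_
      ⟨facet_frontier hP (hFf 0) (hvF 0), hvγ⟩ ⟨facet_frontier hP (hGf _) hy.1, hyγ⟩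
    · exact ((facets_finite hP.1).subset (fun K hK => hK.1)).isClosed_biUnion
        (fun K hK => hK.1.1.2.1)
    · intro x hx
      obtain ⟨K, hK, hxK⟩ := frontier_facet hP D hx
      by_cases h : ∃ i, K = F i
      · obtain ⟨i, rfl⟩ := h
        exact Or.inl (mem_iUnion.2 ⟨i, hxK⟩)
      · push Not at h
        exact Or.inr (mem_biUnion (show K ∈ {K | IsFacetOf K P ∧ ∀ i, K ≠ F i} from ⟨hK, h⟩) hxK)
    · rintro x ⟨hx1, hx2⟩
      obtain ⟨i, hi⟩ := mem_iUnion.1 hx1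
      obtain ⟨K, hK, hxK⟩ := mem_iUnion₂.1 hx2
      obtain ⟨j, hj⟩ := hcov i (F i ∩ K)
        (inter_edge hP D (hFf i) hK.1 (fun h => hK.2 i h.symm) ⟨x, hi, hxK⟩) inter_subset_left
        (fun h => by
          obtain ⟨i', hi'⟩ := hvall K hK.1 h.2
          exact hK.2 i' hi')
      exact mem_iUnion.2 ⟨j, hj ▸ ⟨hi, hxK⟩⟩
    · exact mem_biUnion (show G ⟨0, hj0⟩ ∈ {K | IsFacetOf K P ∧ ∀ i, K ≠ F i} from
        ⟨hGf _, fun i h => hGF _ i h.symm⟩) hy.1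
  refine ⟨fun q => G (jj q), γ, connectedComponentIn (frontier P \ γ) v,
    connectedComponentIn (frontier P \ γ) y,
    ⟨v, ⟨facet_frontier hP (hFf 0) (hvF 0), hvγ⟩, rfl⟩,
    ⟨y, ⟨facet_frontier hP (hGf _) hy.1, hyγ⟩, rfl⟩, hsepar,
    ⟨hL, fun i => (relint_sub_UF (hFf i)).trans (comp_facet hP hγU (hFf i) (hvF i) hvγ),
      n, u, φ, hvia, fun j => (hadj j).2.2.2.2, N.phi_step, N.phi_surj, fun _ => N.phi_card⟩,
    ⟨hL'loop, fun q => (relint_sub_UF (hGf _)).trans (houter (jj q).1 (jj q).2),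
      n, u, ψ, hvia, fun j => ?_, N.psi_step, hψs, fun _ => N.psi_card⟩⟩
  simp only [hL'eq j]
  rw [hGeq j]
  exact inter_subset_right

lemma borders_exists {P : Set E3} (hP : IsSimplePolytope3 P) (D : HDat P) {F : Fin 3 → Set E3}
    (hL : IsLoop P F) {v : E3} (hT : Trip P v (F 0) (F 1) (F 2))
    (h4 : ∀ i, 4 ≤ facetEdges P (F i)) (k : ℕ)
    (hk : k = facetEdges P (F 0) + facetEdges P (F 1) + facetEdges P (F 2) - 9) :
    ∃ L' : Fin k → Set E3, Borders P F L' := by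
  have hTi : ∀ i : Fin 3, Trip P v (F i) (F (i + 2)) (F (i + 1)) := by
    intro i
    have hi : i = 0 ∨ i = 1 ∨ i = 2 := by fin_cases i <;> decide
    rcases hi with rfl | rfl | rfl
    · exact hT.swap
    · exact hT.rot.swap
    · exact hT.rot.rot.swap
  choose S X hX hX0 hXa hXb using fun i => exists_poly hP D (hTi i)
  have hS4 : ∀ i, 4 ≤ S i := fun i => by have := h4 i; rw [(hX i).card] at this; exact this
  have h3 : ∀ i : Fin 3, i + 1 + 2 = i := by decide
  have hlink : ∀ i, X i (S i - 1) = X (i + 1) 1 := by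
    intro i
    have e1 := hXb i
    have e2 := hXa (i + 1)
    rw [h3 i, inter_comm, e1] at e2
    have hs := hS4 i
    have hs1 := hS4 (i + 1)
    have hadj := (hX (i + 1)).adj 0
    rw [hX0] at hadj
    refine seg_right_unique ((hX i).adj (S i - 1)).2.1 ?_ hadj.2.2.2.1.1.2.2.2.subset e2
    intro h
    rw [← hX0 i] at h
    have := (hX i).inj 0 (S i - 1) (by omega) (by omega) h
    omega
  have c0 := (hX 0).card
  have c1 := (hX 1).card
  have c2 := (hX 2).card
  have s0 := hS4 0
  have s1 := hS4 1
  have s2 := hS4 2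
  obtain ⟨φ, off, ψ, jj, N⟩ := exists_num (fun i => S i - 2)
    (fun i => by have := hS4 i; omega) (S 0 - 2 + (S 1 - 2) + (S 2 - 2)) k rfl (by omega)
  have hoff : ∀ j, off j + 2 < S (φ j) := by
    intro j
    have := N.lt j
    omega
  have hnext : ∀ j, X (φ (nxt j)) (off (nxt j) + 1) = X (φ j) (off j + 1 + 1) := by
    intro j
    rcases N.step j with ⟨e1, e2⟩ | ⟨e1, e2, e3⟩
    · rw [e1, e2]
    · rw [e1, e3, zero_add, ← hlink]
      have := hoff j
      congr 1
      omega
  have hXv : ∀ i t, IsVertexOf (X i t) P := fun i t => ((hX i).adj t).2.1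
  have hXF : ∀ i t, X i t ∈ F i := fun i t => ((hX i).adj t).2.2.2.2 (left_mem_segment ℝ _ _)
  have hne : ∀ i i' t t', i' = i + 1 → 1 ≤ t → t + 1 < S i → X i t ≠ X i' t' := by
    rintro i i' t t' rfl ht ht' h
    have hm : X i t ∈ F i ∩ F (i + 1) := ⟨hXF i t, h ▸ hXF (i + 1) t'⟩
    have hE := (hTi i).swap.edge D hP.1
    rw [hXb i] at hm hE
    rcases vertex_mem_seg (hXv i t) hE.1.2.2.2.subset hm with h1 | h1
    · rw [← hX0 i] at h1
      have := (hX i).inj _ _ (by omega) (by omega) h1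
      omega
    · have := (hX i).inj _ _ (by omega) (by omega) h1
      omega
  refine borders_of_cycle hP D hL hT (by omega) (by omega) N (fun j => X (φ j) (off j + 1))
    ?_ ?_ ?_ ?_
  · intro j j' h
    simp only at h
    have h1 := hoff j
    have h2 := hoff j'
    have hc : ∀ a b : Fin 3, a = b ∨ b = a + 1 ∨ a = b + 1 := by decide
    rcases hc (φ j) (φ j') with e | e | e
    · refine N.inj j j' e ?_
      rw [← e] at h h2
      have := (hX (φ j)).inj _ _ (by omega) (by omega) h
      omega
    · exact absurd h (hne _ _ _ _ e (by omega) (by omega))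
    · exact absurd h.symm (hne _ _ _ _ e (by omega) (by omega))
  · intro j
    simp only [hnext]
    exact (hX _).adj _
  · intro j hv
    simp only [hnext] at hv
    have h1 := hoff j
    have hs := ((hX (φ j)).adj (off j + 1)).2.2.2.1.1.2.2.2.subset
    rcases vertex_mem_seg hT.vert hs hv with h | h <;> rw [← hX0 (φ j)] at h
    · have := (hX (φ j)).inj _ _ (by omega) (by omega) h
      omega
    · have := (hX (φ j)).inj _ _ (by omega) (by omega) h
      omega
  · intro i e he heF hve
    obtain ⟨t, ht, rfl⟩ := (hX i).surj e he heF
    have hs := hS4 i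
    have ht0 : t ≠ 0 := by
      rintro rfl
      rw [hX0] at hve
      exact hve (left_mem_segment ℝ _ _)
    have ht1 : t + 1 ≠ S i := by
      intro h
      rw [h, (hX i).per, hX0] at hve
      exact hve (right_mem_segment ℝ _ _)
    obtain ⟨j, hj, hj'⟩ := N.surj i (t - 1) (by omega)
    refine ⟨j, ?_⟩
    simp only [hnext]
    rw [hj, hj', show t - 1 + 1 = t by omega]

/-- If a 3-loop in a simple 3-polytope with `p₃ = 0` is not a 3-belt, then its three
facets meet in a vertex, and the loop borders a `k`-loop with
`k = sᵢ + sⱼ + sₖ - 9 ≥ 3`. -/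
theorem three_loop_lemma (P : Set E3) (hP : IsSimplePolytope3 P) (h3 : pVec P 3 = 0)
    (L : Fin 3 → Set E3) (hL : IsLoop P L) (hnb : ¬ IsBelt P L) :
    (∃ v : E3, IsVertexOf v P ∧ L 0 ∩ L 1 ∩ L 2 = {v}) ∧
    3 ≤ facetEdges P (L 0) + facetEdges P (L 1) + facetEdges P (L 2) - 9 ∧
    ∃ L' : Fin (facetEdges P (L 0) + facetEdges P (L 1) + facetEdges P (L 2) - 9) →
        Set E3, Borders P L L' := by
  obtain ⟨D⟩ := exists_hdat hP.1 hP.2.1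
  have hne : ∀ i, L i ≠ L (nxt i) := by
    intro i h
    have := (hL.2.2 (by norm_num) i).2
    rw [← h, inter_self, (hL.2.1 i).2] at this
    omega
  have n0 : nxt (0 : Fin 3) = 1 := by decide
  have n1 : nxt (1 : Fin 3) = 2 := by decide
  have n2 : nxt (2 : Fin 3) = 0 := by decide
  have h01 : L 0 ≠ L 1 := n0 ▸ hne 0
  have h12 : L 1 ≠ L 2 := n1 ▸ hne 1
  have h20 : L 2 ≠ L 0 := n2 ▸ hne 2
  have hnon : (L 0 ∩ L 1 ∩ L 2).Nonempty := by
    by_contra hemp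
    rw [not_nonempty_iff_eq_empty] at hemp
    refine hnb ⟨le_refl _, hL, fun _ i => ?_, fun h => absurd h (by norm_num)⟩
    have hi : i = 0 ∨ i = 1 ∨ i = 2 := by fin_cases i <;> decide
    rcases hi with rfl | rfl | rfl
    · rw [n0, n1]; exact hemp
    · rw [n1, n2, inter_comm, ← inter_assoc]; exact hemp
    · rw [n2, n0, inter_assoc, inter_comm]; exact hemp
  obtain ⟨v, hT⟩ := triple_vertex hP (hL.2.1 0) (hL.2.1 1) (hL.2.1 2) h01 h20.symm h12 hnon
  have h4 : ∀ i, 4 ≤ facetEdges P (L i) := by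
    intro i
    have hT' : ∃ A B, Trip P v (L i) A B := by
      have hi : i = 0 ∨ i = 1 ∨ i = 2 := by fin_cases i <;> decide
      rcases hi with rfl | rfl | rfl
      exacts [⟨_, _, hT⟩, ⟨_, _, hT.rot⟩, ⟨_, _, hT.rot.rot⟩]
    obtain ⟨A, B, hT'⟩ := hT'
    obtain ⟨s, x, hx, -⟩ := exists_poly hP D hT'
    have h3' := hx.three
    rw [← hx.card] at h3'
    have hn3 : facetEdges P (L i) ≠ 3 := by
      intro h
      unfold pVec at h3
      rw [Set.ncard_eq_zero ((facets_finite hP.1).subset (fun F hF => hF.1))] at h3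
      have : L i ∈ {F | IsFacetOf F P ∧ facetEdges P F = 3} := ⟨hL.2.1 i, h⟩
      rw [h3] at this
      exact this
    omega
  have a0 := h4 0
  have a1 := h4 1
  have a2 := h4 2
  refine ⟨⟨v, hT.vert, ?_⟩, by omega, borders_exists hP D hL hT h4 _ rfl⟩
  ext x
  constructor
  · rintro ⟨⟨hx0, hx1⟩, hx2⟩
    exact hT.inter_eq D hP.1 hx0 hx1 hx2
  · rintro rfl
    exact ⟨⟨hT.mF, hT.mG⟩, hT.mH⟩
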